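/- arXiv:1810.10114 — 3 statements merged into one kernel-verified Lean document; each statement's English description precedes it below -/
import Mathlib

section
/- Assume Γ(0) ≠ Γ(1) and 1 + ρ·ln(Γ(1)^{μ(1)} Γ(0)^{μ(0)}) > 0 for some ρ > 0, and let n ↦ L_n be a ρ-admissible scaling with associated sequence ρ_n. For each n ≥ 2 let (D_n, S_n) be a compound-binomial degree pair with parameters (n, L_n). Then the convergence to log-normality is uniform: lim_{n→∞} sup_{x ≥ 0} | P((D_n)^{1/√L_n} · exp(−√L_n (1/ρ_n + ln(Γ(1)^{μ(1)} Γ(0)^{μ(0)}))) ≤ x) − P(e^{σZ} ≤ x) | = 0, where Z is standard Gaussian and σ = √(μ(0)μ(1)) · ln(Γ(1)/Γ(0)). -/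
/-!
Write `lg = ln (Γ1^μ1 Γ0^μ0)`, `q k = Γ1^k Γ0^(L-k)` and `σ = √(μ0 μ1) ln (Γ1/Γ0)`. The logarithm of
the transformed degree is `R = (ln D - ln n - L lg) / √L`. Given `S = k`, the degree `D` has mean
`(n-1) q k`, and `ln (q k) = L lg + (k - L μ1) ln (Γ1/Γ0)`. So if `D` is comparable to its
conditional mean, then `R` is within `O(1/√L)` of `ln (Γ1/Γ0) (S - L μ1) / √L`, which converges in
law to `σ Z` by the central limit theorem for the binomial variable `S` (`clt_binomial`).

The comparison holds with probability tending to one (`exists_bad_tendsto`): by Chebyshev's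
inequality `|S - L μ1| < ε L` with high probability, and for small `ε` the condition `1 + ρ lg > 0`
then makes `(n-1) q(S)` at least a positive power of `n`; a second application of Chebyshev's
inequality, conditionally on `S`, gives `|D - (n-1) q(S)| < (n-1) q(S) / 2`. Slutsky's theorem
yields `R → σ Z` in distribution (`log_degree_tendstoInDistribution`).

Since `σ ≠ 0`, the limiting distribution function is continuous, so the convergence of distribution
functions is uniform by Pólya's theorem (`polya`). Passing from `R` to the transformed degree itself
costs at most `P(D = 0) → 0`, because `ln` fails to be inverse to `exp` only at `D = 0`.
-/

open MeasureTheory ProbabilityTheory Filter Real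
open scoped ENNReal NNReal

noncomputable section

/-- A compound-binomial degree pair `(D, S)` with parameters `(n, L)`:
`S` is Binomial(L, μ1) and, conditionally on `S = ℓ`, `D` is
Binomial(n-1, Γ1^ℓ Γ0^(L-ℓ)); equivalently the joint pmf is as below. -/
def IsCompoundBinomialPair {Ω : Type*} [MeasurableSpace Ω] (P : Measure Ω)
    (μ1 μ0 Γ1 Γ0 : ℝ) (n L : ℕ) (D S : Ω → ℕ) : Prop :=
  Measurable D ∧ Measurable S ∧
    ∀ d ≤ n - 1, ∀ ℓ ≤ L,
      P {ω | D ω = d ∧ S ω = ℓ} =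
        ENNReal.ofReal ((L.choose ℓ : ℝ) * μ1 ^ ℓ * μ0 ^ (L - ℓ) *
          ((n - 1).choose d : ℝ) * (Γ1 ^ ℓ * Γ0 ^ (L - ℓ)) ^ d *
          (1 - Γ1 ^ ℓ * Γ0 ^ (L - ℓ)) ^ (n - 1 - d))

/-- A scaling `n ↦ L n` is `ρ`-admissible if `L n ~ ρ ln n` as `n → ∞`. -/
def IsAdmissible (ρ : ℝ) (L : ℕ → ℕ) : Prop :=
  (∀ n, 0 < L n) ∧
    Tendsto (fun n => (L n : ℝ) / (ρ * Real.log n)) atTop (nhds 1)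

/-- `Ψ(x) = (x+1) ln(x+1) - x`. -/
def Psi (x : ℝ) : ℝ := (x + 1) * Real.log (x + 1) - x

/-- The standard Gaussian distribution function. -/
def Phi (z : ℝ) : ℝ := ∫ t in Set.Iic z, Real.exp (-t ^ 2 / 2) / Real.sqrt (2 * Real.pi)


/-! ### Uniform convergence of distribution functions -/

/-- Pólya's theorem: monotone `[0,1]`-valued functions converging pointwise to a continuous
distribution function converge uniformly. Compactness of `[a, b]` handles the bulk, and monotonicity
the tails, where the limit is within `ε / 2` of `0` or `1`. -/
lemma polya (G : ℕ → ℝ → ℝ) (F : ℝ → ℝ) (hG : ∀ n, Monotone (G n))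
    (hG0 : ∀ n t, 0 ≤ G n t) (hG1 : ∀ n t, G n t ≤ 1)
    (hF : Monotone F) (hFc : Continuous F)
    (hF0 : Tendsto F atBot (nhds 0)) (hF1 : Tendsto F atTop (nhds 1))
    (h : ∀ t, Tendsto (fun n => G n t) atTop (nhds (F t))) {ε : ℝ} (hε : 0 < ε) :
    ∀ᶠ n in atTop, ∀ t, |G n t - F t| < ε := by
  have hFn : ∀ t, 0 ≤ F t := fun t => ge_of_tendsto (h t) (Eventually.of_forall fun n => hG0 n t)
  have hFl : ∀ t, F t ≤ 1 := fun t => le_of_tendsto (h t) (Eventually.of_forall fun n => hG1 n t)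
  obtain ⟨a, ha⟩ := (hF0.eventually_lt_const (half_pos hε)).exists
  obtain ⟨b, hb⟩ := (hF1.eventually_const_lt (show 1 - ε / 2 < 1 by linarith)).exists
  have close : ∀ t, ∀ᶠ n in atTop, |G n t - F t| < ε / 2 := fun t => by
    simpa [Real.dist_eq] using (Metric.tendsto_nhds.1 (h t)) (ε / 2) (half_pos hε)
  have hK : ∀ᶠ n in atTop, ∀ t ∈ Set.Icc a b, |G n t - F t| < ε := by
    refine (isCompact_Icc (a := a) (b := b)).induction_on
      (p := fun s => ∀ᶠ n in atTop, ∀ t ∈ s, |G n t - F t| < ε) ?_ ?_ ?_ ?_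
    · simp
    · intro s t hst ht
      filter_upwards [ht] with n hn x hx using hn x (hst hx)
    · intro s t hs ht
      filter_upwards [hs, ht] with n hn hn' x hx
      exact hx.elim (hn x) (hn' x)
    · intro x _
      obtain ⟨δ, hδ, hδF⟩ := Metric.continuous_iff.1 hFc x (ε / 4) (by linarith)
      refine ⟨Set.Ioo (x - δ / 2) (x + δ / 2),
        mem_nhdsWithin_of_mem_nhds (Ioo_mem_nhds (by linarith) (by linarith)), ?_⟩
      have h1 := hδF (x - δ / 2) (by rw [Real.dist_eq, abs_lt]; constructor <;> linarith)
      have h2 := hδF (x + δ / 2) (by rw [Real.dist_eq, abs_lt]; constructor <;> linarith)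
      rw [Real.dist_eq, abs_lt] at h1 h2
      filter_upwards [close (x - δ / 2), close (x + δ / 2)] with n hn1 hn2 t ht
      rw [abs_lt] at *
      have := hG n ht.1.le
      have := hG n ht.2.le
      have := hF ht.1.le
      have := hF ht.2.le
      constructor <;> linarith
  filter_upwards [hK, close a, close b] with n hn hna hnb t
  rw [abs_lt] at hna hnb ⊢
  rcases lt_or_ge t a with hta | hta
  · have := hG n hta.le
    have := hF hta.le
    have := hG0 n t
    have := hFn t
    constructor <;> linarith
  rcases lt_or_ge b t with htb | htb
  · have := hG n htb.le
    have := hF htb.le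
    have := hG1 n t
    have := hFl t
    constructor <;> linarith
  exact abs_lt.1 (hn t ⟨hta, htb⟩)

/-- The distribution function of an atomless law is continuous. -/
lemma continuous_cdf_of_nullSingleton (γ : Measure ℝ) [IsProbabilityMeasure γ]
    (hγ : ∀ t, γ {t} = 0) : Continuous (cdf γ) := by
  rw [continuous_iff_continuousAt]
  intro t
  rw [(monotone_cdf γ).continuousAt_iff_leftLim_eq_rightLim, (cdf γ).rightLim_eq]
  have h := (cdf γ).measure_singleton t
  rw [measure_cdf, hγ t, eq_comm, ENNReal.ofReal_eq_zero] at h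
  exact le_antisymm ((monotone_cdf γ).leftLim_le le_rfl) (by linarith)

/-! ### Binomial weights and finitely supported laws -/

/-- The mass `C(N,k) p^k (1-p)^(N-k)` that the law Binomial(N, p) gives to `k`. -/
def bpmf (N : ℕ) (p : ℝ) (k : ℕ) : ℝ := (N.choose k : ℝ) * p ^ k * (1 - p) ^ (N - k)

lemma bpmf_nonneg {p : ℝ} (hp : p ∈ Set.Icc (0 : ℝ) 1) (N k : ℕ) : 0 ≤ bpmf N p k := by
  have h0 := hp.1
  have h1 : 0 ≤ 1 - p := by linarith [hp.2]
  unfold bpmf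
  positivity

lemma bpmf_sum (N : ℕ) (p : ℝ) : ∑ k ∈ Finset.range (N + 1), bpmf N p k = 1 := by
  have := add_pow p (1 - p) N
  rw [add_sub_cancel, one_pow] at this
  rw [this]
  exact Finset.sum_congr rfl fun k _ => by unfold bpmf; ring

/-- Chebyshev's inequality for the binomial law, from the variance identity for Bernstein
polynomials. -/
lemma bpmf_chebyshev {p : ℝ} (hp : p ∈ Set.Icc (0 : ℝ) 1) {N : ℕ} (hN : N ≠ 0) {δ : ℝ}
    (hδ : 0 < δ) :
    ∑ k ∈ Finset.range (N + 1), (if δ * N ≤ |(k : ℝ) - N * p| then bpmf N p k else 0) ≤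
      p * (1 - p) / (N * δ ^ 2) := by
  have hNpos : (0 : ℝ) < N := by positivity
  have hvar := bernstein.variance hN ⟨p, hp⟩
  simp only [bernstein_apply, bernstein.z] at hvar
  have hvar' : ∑ k ∈ Finset.range (N + 1), (p - (k : ℝ) / N) ^ 2 * bpmf N p k
      = p * (1 - p) / N := by
    rw [Finset.sum_range]
    exact hvar
  have : p * (1 - p) / (N * δ ^ 2) =
      ∑ k ∈ Finset.range (N + 1), (p - (k : ℝ) / N) ^ 2 * bpmf N p k / δ ^ 2 := by
    rw [← Finset.sum_div, hvar', div_div]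
  rw [this]
  refine Finset.sum_le_sum fun k _ => ?_
  have hb := bpmf_nonneg hp N k
  split_ifs with hk
  · rw [le_div_iff₀ (by positivity), mul_comm]
    refine mul_le_mul_of_nonneg_right ?_ hb
    have : δ ≤ |p - (k : ℝ) / N| := by
      have e : p - (k : ℝ) / N = -((k : ℝ) - N * p) / N := by field_simp; ring
      rw [e, abs_div, abs_neg, abs_of_pos hNpos, le_div_iff₀ hNpos]
      exact hk
    rw [← sq_abs (p - (k : ℝ) / N)]
    gcongr
  · positivity

/-- If prescribed point masses on a finite set add up to one, they determine the law: nothing is left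
for the complement. -/
lemma map_eq_sum_dirac {Ω α : Type*} [MeasurableSpace Ω] [MeasurableSpace α] [Countable α]
    [MeasurableSingletonClass α] (P : Measure Ω) [IsProbabilityMeasure P] {X : Ω → α}
    (hX : Measurable X) (s : Finset α) (w : α → ℝ) (hw : ∀ z ∈ s, 0 ≤ w z)
    (hw1 : ∑ z ∈ s, w z = 1) (hXw : ∀ z ∈ s, P (X ⁻¹' {z}) = ENNReal.ofReal (w z)) :
    P.map X = ∑ z ∈ s, ENNReal.ofReal (w z) • Measure.dirac z := by
  classical
  have hs : P (X ⁻¹' (s : Set α)) = 1 := by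
    have : X ⁻¹' (s : Set α) = ⋃ z ∈ s, X ⁻¹' {z} := by ext; simp
    rw [this, measure_biUnion_finset]
    · rw [Finset.sum_congr rfl hXw, ← ENNReal.ofReal_sum_of_nonneg hw, hw1, ENNReal.ofReal_one]
    · intro a _ b _ hab
      exact Disjoint.preimage _ (by simpa using hab)
    · intro z _
      exact hX (measurableSet_singleton z)
  refine Measure.ext_of_singleton fun z => ?_
  rw [Measure.map_apply hX (measurableSet_singleton z), Measure.finsetSum_apply]
  simp only [Measure.smul_apply, smul_eq_mul]
  by_cases hz : z ∈ s
  · rw [Finset.sum_eq_single_of_mem z hz]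
    · simp [hXw z hz]
    · intro b _ hb
      simp [hb]
  · rw [Finset.sum_eq_zero]
    · have hc : P (X ⁻¹' (s : Set α))ᶜ = 0 :=
        (prob_compl_eq_zero_iff (hX s.measurableSet)).2 hs
      refine measure_mono_null ?_ hc
      rintro ω hω
      simp only [Set.mem_preimage, Set.mem_singleton_iff] at hω
      simpa [hω] using hz
    · intro b hb
      have : b ≠ z := fun h => hz (h ▸ hb)
      simp [this]

lemma integral_comp_of_map {Ω α : Type*} [MeasurableSpace Ω] [MeasurableSpace α] [Countable α]
    [MeasurableSingletonClass α] (P : Measure Ω) {X : Ω → α}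
    (hX : Measurable X) (s : Finset α) (w : α → ℝ) (hw : ∀ z ∈ s, 0 ≤ w z)
    (hmap : P.map X = ∑ z ∈ s, ENNReal.ofReal (w z) • Measure.dirac z) (φ : α → ℂ) :
    ∫ ω, φ (X ω) ∂P = ∑ z ∈ s, (w z : ℂ) * φ z := by
  have hφ : StronglyMeasurable φ := (measurable_of_countable φ).stronglyMeasurable
  rw [← integral_map hX.aemeasurable hφ.aestronglyMeasurable, hmap, integral_finsetSum_measure]
  · refine Finset.sum_congr rfl fun z hz => ?_
    rw [integral_smul_measure, integral_dirac, ENNReal.toReal_ofReal (hw z hz)]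
    simp
  · intro z _
    exact (integrable_dirac (by simp)).smul_measure ENNReal.ofReal_ne_top

lemma real_preimage_of_map {Ω α : Type*} [MeasurableSpace Ω] [MeasurableSpace α] [Countable α]
    [MeasurableSingletonClass α] (P : Measure Ω) {X : Ω → α}
    (hX : Measurable X) (s : Finset α) (w : α → ℝ) (hw : ∀ z ∈ s, 0 ≤ w z)
    (hmap : P.map X = ∑ z ∈ s, ENNReal.ofReal (w z) • Measure.dirac z) (A : α → Prop)
    [DecidablePred A] :
    P.real {ω | A (X ω)} = ∑ z ∈ s, if A z then w z else 0 := by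
  have : P.real {ω | A (X ω)} = (P.map X).real {z | A z} := by
    rw [map_measureReal_apply hX (Set.to_countable _).measurableSet]; rfl
  rw [this, hmap, measureReal_def, Measure.finsetSum_apply, ENNReal.toReal_sum]
  · refine Finset.sum_congr rfl fun z hz => ?_
    simp only [Measure.smul_apply, smul_eq_mul, ENNReal.toReal_mul,
      ENNReal.toReal_ofReal (hw z hz)]
    by_cases h : A z <;> simp [h]
  · intro z _
    exact ENNReal.mul_ne_top ENNReal.ofReal_ne_top (measure_ne_top _ _)

/-! ### Central limit theorem for the binomial law -/

/-- De Moivre–Laplace along `L n → ∞`. Only the law of each `S n` is prescribed, so the characteristic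
function is computed by the binomial theorem as an `L n`-th power of that of a standardised Bernoulli
variable, and Lévy's continuity theorem applies. -/
lemma clt_binomial {Ω : Type*} [MeasurableSpace Ω] (P : Measure Ω) [IsProbabilityMeasure P]
    {p : ℝ} (hp : p ∈ Set.Ioo (0 : ℝ) 1) (L : ℕ → ℕ) (hL : Tendsto L atTop atTop)
    (S : ℕ → Ω → ℕ) (hS : ∀ n, Measurable (S n))
    (hlaw : ∀ᶠ n in atTop, ∀ φ : ℕ → ℂ,
      ∫ ω, φ (S n ω) ∂P = ∑ k ∈ Finset.range (L n + 1), (bpmf (L n) p k : ℂ) * φ k) :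
    TendstoInDistribution
      (fun n ω => ((S n ω : ℝ) - L n * p) / (√(p * (1 - p)) * √(L n))) atTop
      (fun z : ℝ => z) (fun _ => P) (gaussianReal 0 1) := by
  have hp0 := hp.1
  have hp1 : 0 < 1 - p := by linarith [hp.2]
  set s : ℝ := √(p * (1 - p)) with hs
  have hspos : 0 < s := Real.sqrt_pos.2 (mul_pos hp0 hp1)
  have hs2 : s ^ 2 = p * (1 - p) := Real.sq_sqrt (mul_pos hp0 hp1).le
  have hmeas : ∀ n, Measurable (fun ω => ((S n ω : ℝ) - L n * p) / (s * √(L n))) := fun n => by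
    have := hS n
    fun_prop
  refine ⟨fun n => (hmeas n).aemeasurable, by fun_prop, ?_⟩
  set a : ℝ := (1 - p) / s with ha
  set b : ℝ := -p / s with hb
  -- `ν` is the law of one standardised Bernoulli variable
  set ν : Measure ℝ :=
    ENNReal.ofReal p • Measure.dirac a + ENNReal.ofReal (1 - p) • Measure.dirac b with hν
  have hint : ∀ {E : Type} [NormedAddCommGroup E] [NormedSpace ℝ E] [CompleteSpace E] (f : ℝ → E),
      ∫ x, f x ∂ν = p • f a + (1 - p) • f b := by
    intro E _ _ _ f
    rw [hν, integral_add_measure, integral_smul_measure, integral_smul_measure,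
        integral_dirac, integral_dirac, ENNReal.toReal_ofReal hp0.le, ENNReal.toReal_ofReal hp1.le]
    · exact (integrable_dirac (by simp)).smul_measure ENNReal.ofReal_ne_top
    · exact (integrable_dirac (by simp)).smul_measure ENNReal.ofReal_ne_top
  have hprob : IsProbabilityMeasure ν := ⟨by
    simp only [hν, Measure.add_apply, Measure.smul_apply, measure_univ, smul_eq_mul, mul_one]
    rw [← ENNReal.ofReal_add hp0.le hp1.le]
    simp⟩
  have h0 : ∫ x, id x ∂ν = 0 := by
    rw [hint]; simp only [id, smul_eq_mul, ha, hb]; ring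
  have h1 : ∫ x, ((id : ℝ → ℝ) ^ 2) x ∂ν = 1 := by
    rw [hint]; simp only [Pi.pow_apply, id, smul_eq_mul, ha, hb]
    rw [div_pow, div_pow, hs2]
    field_simp
    ring
  refine ProbabilityMeasure.tendsto_iff_tendsto_charFun.2 fun t => ?_
  have key := (tendsto_charFun_inv_sqrt_mul_pow (P := ν) (X := id) aemeasurable_id h0 h1 t).comp hL
  have hlim : charFun ((gaussianReal 0 1).map (fun z : ℝ => z)) t
      = Complex.exp (-(t : ℂ) ^ 2 / 2) := by
    simp [charFun_gaussianReal, neg_div]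
  change Tendsto (fun n => charFun (P.map fun ω => ((S n ω : ℝ) - L n * p) / (s * √(L n))) t) atTop
    (nhds (charFun ((gaussianReal 0 1).map (fun z : ℝ => z)) t))
  rw [hlim]
  refine key.congr' ?_
  filter_upwards [hlaw, hL.eventually_gt_atTop 0] with n hn hLn
  have hLpos : (0 : ℝ) < √(L n) := Real.sqrt_pos.2 (by exact_mod_cast hLn)
  have hLsq : √(L n : ℝ) * √(L n) = L n := Real.mul_self_sqrt (by positivity)
  simp only [Function.comp_apply, Measure.map_id]
  rw [charFun_apply_real, charFun_apply_real, hint, integral_map (hmeas n).aemeasurable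
    (by fun_prop), hn (fun k => Complex.exp (t * (((k : ℝ) - L n * p) / (s * √(L n)) : ℝ) *
      Complex.I)), add_pow]
  refine Finset.sum_congr rfl fun k hk => ?_
  have hkL : k ≤ L n := Nat.lt_succ_iff.1 (Finset.mem_range.1 hk)
  simp only [Complex.real_smul, mul_pow, ← Complex.exp_nat_mul, bpmf]
  push_cast
  have hexp : Complex.exp (t * (((k : ℂ) - L n * p) / (s * (√(L n) : ℝ))) * Complex.I) =
      Complex.exp ((k : ℂ) * (((√(L n) : ℝ) : ℂ)⁻¹ * t * a * Complex.I)) *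
      Complex.exp (((L n - k : ℕ) : ℂ) * (((√(L n) : ℝ) : ℂ)⁻¹ * t * b * Complex.I)) := by
    rw [← Complex.exp_add]
    congr 1
    have : (s : ℂ) ≠ 0 := by exact_mod_cast hspos.ne'
    have : ((√(L n) : ℝ) : ℂ) ≠ 0 := by exact_mod_cast hLpos.ne'
    rw [Nat.cast_sub hkL, ha, hb]
    push_cast
    field_simp
    ring
  rw [hexp]
  ring

/-! ### Concentration of the degree -/

/-- The union bound behind the theorem: up to the two Chebyshev errors, `S` is within `ε L` of its
mean and `D` is within a factor between `1/2` and `3/2` of its conditional mean `N q(S)`. -/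
lemma tail_bound {p : ℝ} (hp : p ∈ Set.Icc (0 : ℝ) 1) {N L : ℕ} (hN : N ≠ 0) (hL : L ≠ 0)
    (q : ℕ → ℝ) (hq : ∀ k, 0 < q k ∧ q k ≤ 1) {ε M : ℝ} (hε : 0 < ε) (hM : 0 < M)
    (hqM : ∀ k ≤ L, |(k : ℝ) - L * p| < ε * L → M ≤ N * q k) :
    ∑ z ∈ Finset.range (N + 1) ×ˢ Finset.range (L + 1),
      (if ε * L ≤ |(z.2 : ℝ) - L * p| ∨ q z.2 / 2 * N ≤ |(z.1 : ℝ) - N * q z.2| then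
        bpmf L p z.2 * bpmf N (q z.2) z.1 else 0) ≤ p * (1 - p) / (L * ε ^ 2) + 4 / M := by
  rw [Finset.sum_product_right]
  have hNpos : (0 : ℝ) < N := by positivity
  have hle : ∀ k ∈ Finset.range (L + 1), (∑ d ∈ Finset.range (N + 1),
      (if ε * L ≤ |(k : ℝ) - L * p| ∨ q k / 2 * N ≤ |(d : ℝ) - N * q k| then
        bpmf L p k * bpmf N (q k) d else 0)) ≤
      (if ε * L ≤ |(k : ℝ) - L * p| then bpmf L p k else 0) + bpmf L p k * (4 / M) := by
    intro k hk
    have hb := bpmf_nonneg hp L k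
    obtain ⟨hq0, hq1⟩ := hq k
    by_cases hA : ε * L ≤ |(k : ℝ) - L * p|
    · simp only [hA, true_or, if_true]
      rw [← Finset.mul_sum, bpmf_sum, mul_one]
      have : 0 ≤ bpmf L p k * (4 / M) := by positivity
      linarith
    · simp only [hA, false_or, if_false, zero_add]
      have hc := bpmf_chebyshev (p := q k) ⟨hq0.le, hq1⟩ hN (half_pos hq0)
      have hM' := hqM k (Nat.lt_succ_iff.1 (Finset.mem_range.1 hk)) (not_le.1 hA)
      have e : ∀ d : ℕ, (if q k / 2 * N ≤ |(d : ℝ) - N * q k| then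
          bpmf L p k * bpmf N (q k) d else 0) = bpmf L p k *
          (if q k / 2 * N ≤ |(d : ℝ) - N * q k| then bpmf N (q k) d else 0) := fun d => by
        split_ifs <;> simp
      simp only [e]
      rw [← Finset.mul_sum]
      refine mul_le_mul_of_nonneg_left (hc.trans ?_) hb
      have e2 : q k * (1 - q k) / (N * (q k / 2) ^ 2) = 4 * (1 - q k) / (N * q k) := by
        field_simp; ring
      rw [e2]
      exact div_le_div₀ (by norm_num) (by linarith) hM hM'
  refine (Finset.sum_le_sum hle).trans ?_
  rw [Finset.sum_add_distrib, ← Finset.sum_mul, bpmf_sum, one_mul]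
  have := bpmf_chebyshev hp hL hε
  linarith

/-- Off the exceptional event, `D` and `n q` agree up to a bounded factor. -/
lemma abs_log_le {n q d : ℝ} (hn : 2 ≤ n) (hq : 0 < q)
    (h : |d - (n - 1) * q| < q / 2 * (n - 1)) :
    0 < d ∧ |Real.log d - Real.log n - Real.log q| ≤ Real.log 4 := by
  rw [abs_lt] at h
  have hnq : 2 * q ≤ n * q := by nlinarith
  have h1 : n * q / 4 ≤ d := by nlinarith
  have h2 : d ≤ 4 * (n * q) := by nlinarith
  have hd : 0 < d := by nlinarith
  refine ⟨hd, ?_⟩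
  have l1 := Real.log_le_log (by positivity) h1
  have l2 := Real.log_le_log hd h2
  rw [Real.log_div (by positivity) (by norm_num), Real.log_mul (by positivity) (by positivity)]
    at l1
  rw [Real.log_mul (by positivity) (by positivity), Real.log_mul (by positivity) (by positivity)]
    at l2
  rw [abs_le]
  constructor <;> linarith

/-- The success probability `Γ1^k Γ0^(L-k)` of `D` given `S = k`. -/
def succProb (Γ1 Γ0 : ℝ) (L k : ℕ) : ℝ := Γ1 ^ k * Γ0 ^ (L - k)

lemma succProb_pos_le {Γ1 Γ0 : ℝ} (h1 : Γ1 ∈ Set.Ioo (0 : ℝ) 1) (h0 : Γ0 ∈ Set.Ioo (0 : ℝ) 1)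
    (L k : ℕ) : 0 < succProb Γ1 Γ0 L k ∧ succProb Γ1 Γ0 L k ≤ 1 :=
  ⟨mul_pos (pow_pos h1.1 _) (pow_pos h0.1 _),
    mul_le_one₀ (pow_le_one₀ h1.1.le h1.2.le) (pow_pos h0.1 _).le (pow_le_one₀ h0.1.le h0.2.le)⟩

lemma log_succProb {Γ1 Γ0 : ℝ} (h1 : Γ1 ∈ Set.Ioo (0 : ℝ) 1) (h0 : Γ0 ∈ Set.Ioo (0 : ℝ) 1)
    (p : ℝ) {L k : ℕ} (hk : k ≤ L) :
    Real.log (succProb Γ1 Γ0 L k) = L * (p * Real.log Γ1 + (1 - p) * Real.log Γ0) +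
      (k - L * p) * (Real.log Γ1 - Real.log Γ0) := by
  unfold succProb
  rw [Real.log_mul (pow_pos h1.1 _).ne' (pow_pos h0.1 _).ne', Real.log_pow, Real.log_pow,
    Nat.cast_sub hk]
  ring

/-- The exceptional set for `(D, S)`: `S` is outside its range or far from its mean `L p`, or `D`
is far from its conditional mean. -/
def Bad (p Γ1 Γ0 ε : ℝ) (n L : ℕ) (z : ℕ × ℕ) : Prop :=
  L < z.2 ∨ ε * L ≤ |(z.2 : ℝ) - L * p| ∨
    succProb Γ1 Γ0 L z.2 / 2 * (n - 1 : ℕ) ≤ |(z.1 : ℝ) - (n - 1 : ℕ) * succProb Γ1 Γ0 L z.2|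

section

variable {Ω : Type*} [MeasurableSpace Ω] {P : Measure Ω} [IsProbabilityMeasure P]
  {p Γ1 Γ0 : ℝ} {n L : ℕ} {D S : Ω → ℕ}

/-- The joint law of `(D, S)` is the measure with the prescribed point masses. -/
lemma pair_law (hp : p ∈ Set.Icc (0 : ℝ) 1) (h1 : Γ1 ∈ Set.Ioo (0 : ℝ) 1)
    (h0 : Γ0 ∈ Set.Ioo (0 : ℝ) 1) (h : IsCompoundBinomialPair P p (1 - p) Γ1 Γ0 n L D S) :
    (∀ z ∈ Finset.range (n - 1 + 1) ×ˢ Finset.range (L + 1),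
      0 ≤ bpmf L p z.2 * bpmf (n - 1) (succProb Γ1 Γ0 L z.2) z.1) ∧
    P.map (fun ω => (D ω, S ω)) = ∑ z ∈ Finset.range (n - 1 + 1) ×ˢ Finset.range (L + 1),
      ENNReal.ofReal (bpmf L p z.2 * bpmf (n - 1) (succProb Γ1 Γ0 L z.2) z.1) •
        Measure.dirac z := by
  have hnn : ∀ z ∈ Finset.range (n - 1 + 1) ×ˢ Finset.range (L + 1),
      0 ≤ bpmf L p z.2 * bpmf (n - 1) (succProb Γ1 Γ0 L z.2) z.1 := fun z _ => by
    have := succProb_pos_le h1 h0 L z.2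
    exact mul_nonneg (bpmf_nonneg hp _ _) (bpmf_nonneg ⟨this.1.le, this.2⟩ _ _)
  refine ⟨hnn, map_eq_sum_dirac P (h.1.prodMk h.2.1) _ _ hnn ?_ ?_⟩
  · rw [Finset.sum_product_right]
    simp only [← Finset.mul_sum, bpmf_sum, mul_one]
  · rintro ⟨d, k⟩ hz
    simp only [Finset.mem_product, Finset.mem_range, Nat.lt_succ_iff] at hz
    have := h.2.2 d hz.1 k hz.2
    convert this using 2
    · ext ω; simp
    · simp only [bpmf, succProb]; ring

lemma integral_comp_S (hp : p ∈ Set.Icc (0 : ℝ) 1) (h1 : Γ1 ∈ Set.Ioo (0 : ℝ) 1)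
    (h0 : Γ0 ∈ Set.Ioo (0 : ℝ) 1) (h : IsCompoundBinomialPair P p (1 - p) Γ1 Γ0 n L D S)
    (φ : ℕ → ℂ) :
    ∫ ω, φ (S ω) ∂P = ∑ k ∈ Finset.range (L + 1), (bpmf L p k : ℂ) * φ k := by
  obtain ⟨hnn, hmap⟩ := pair_law hp h1 h0 h
  have := integral_comp_of_map P (h.1.prodMk h.2.1) _ _ hnn hmap (fun z => φ z.2)
  rw [this, Finset.sum_product_right]
  refine Finset.sum_congr rfl fun k _ => ?_
  dsimp only
  rw [← Finset.sum_mul]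
  congr 1
  rw [← Complex.ofReal_sum, ← Finset.mul_sum, bpmf_sum, mul_one]

lemma bad_prob_le (hp : p ∈ Set.Icc (0 : ℝ) 1) (h1 : Γ1 ∈ Set.Ioo (0 : ℝ) 1)
    (h0 : Γ0 ∈ Set.Ioo (0 : ℝ) 1) (h : IsCompoundBinomialPair P p (1 - p) Γ1 Γ0 n L D S)
    (hn : 2 ≤ n) (hL : L ≠ 0) {ε M : ℝ} (hε : 0 < ε) (hM : 0 < M)
    (hqM : ∀ k ≤ L, |(k : ℝ) - L * p| < ε * L → M ≤ (n - 1 : ℕ) * succProb Γ1 Γ0 L k) :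
    P.real {ω | Bad p Γ1 Γ0 ε n L (D ω, S ω)} ≤ p * (1 - p) / (L * ε ^ 2) + 4 / M := by
  classical
  obtain ⟨hnn, hmap⟩ := pair_law hp h1 h0 h
  rw [real_preimage_of_map P (h.1.prodMk h.2.1) _ _ hnn hmap (Bad p Γ1 Γ0 ε n L)]
  refine le_trans (le_of_eq ?_) (tail_bound hp (by omega) hL (succProb Γ1 Γ0 L)
    (succProb_pos_le h1 h0 L) hε hM hqM)
  refine Finset.sum_congr rfl fun z hz => ?_
  have hz2 : ¬ L < z.2 := by
    have := (Finset.mem_product.1 hz).2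
    simp only [Finset.mem_range] at this
    omega
  simp only [Bad, hz2, false_or]

end

/-- If `L n ~ ρ ln n`, then `a ln n + b L n` grows like `(a + ρ b) ln n`. -/
lemma IsAdmissible.tendsto_log_mul {ρ : ℝ} (hρ : 0 < ρ) {L : ℕ → ℕ} (hL : IsAdmissible ρ L)
    {a b : ℝ} (h : 0 < a + ρ * b) :
    Tendsto (fun n : ℕ => a * Real.log n + L n * b) atTop atTop := by
  have hlog : Tendsto (fun n : ℕ => Real.log n) atTop atTop :=
    Real.tendsto_log_atTop.comp tendsto_natCast_atTop_atTop
  have h1 : Tendsto (fun n : ℕ => a + (L n : ℝ) / (ρ * Real.log n) * (ρ * b)) atTop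
      (nhds (a + ρ * b)) := by
    simpa using (hL.2.mul_const (ρ * b)).const_add a
  refine (hlog.atTop_mul_pos h h1).congr' ?_
  filter_upwards [hlog.eventually_gt_atTop 0] with n hn
  field_simp

lemma IsAdmissible.tendsto_atTop {ρ : ℝ} (hρ : 0 < ρ) {L : ℕ → ℕ} (hL : IsAdmissible ρ L) :
    Tendsto L atTop atTop := by
  have := hL.tendsto_log_mul hρ (a := 0) (b := 1) (by simpa using hρ)
  simpa [tendsto_natCast_atTop_iff] using this

/-- The exceptional sets have vanishing probability when `ε` is small: the condition
`1 + ρ ln(Γ1^p Γ0^(1-p)) > 0` then forces the conditional mean of `D` to infinity on their complements. -/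
lemma exists_bad_tendsto {Ω : Type*} [MeasurableSpace Ω] (P : Measure Ω) [IsProbabilityMeasure P]
    {p Γ0 Γ1 : ℝ} (hp : p ∈ Set.Ioo (0 : ℝ) 1)
    (h0 : Γ0 ∈ Set.Ioo (0:ℝ) 1) (h1 : Γ1 ∈ Set.Ioo (0:ℝ) 1) (hΓ : Γ0 ≠ Γ1) {ρ : ℝ} (hρ : 0 < ρ)
    (hcond : 0 < 1 + ρ * (p * Real.log Γ1 + (1 - p) * Real.log Γ0))
    (L : ℕ → ℕ) (hL : IsAdmissible ρ L) (D S : ℕ → Ω → ℕ)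
    (hDS : ∀ n, 2 ≤ n → IsCompoundBinomialPair P p (1 - p) Γ1 Γ0 n (L n) (D n) (S n)) :
    ∃ ε : ℝ, Tendsto (fun n => P.real {ω | Bad p Γ1 Γ0 ε n (L n) (D n ω, S n ω)}) atTop
      (nhds 0) := by
  set lg := p * Real.log Γ1 + (1 - p) * Real.log Γ0 with hlg
  have hne : Real.log Γ1 - Real.log Γ0 ≠ 0 := fun h =>
    hΓ (Real.log_injOn_pos h0.1 h1.1 (sub_eq_zero.1 h).symm)
  set κ := |Real.log Γ1 - Real.log Γ0| with hκ
  have hκpos : 0 < κ := abs_pos.2 hne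
  -- this `ε` gives up exactly half of `1 + ρ lg`
  set ε := (1 + ρ * lg) / (2 * ρ * κ) with hε
  have hεpos : 0 < ε := by positivity
  have hhalf : 0 < 1 + ρ * (lg - ε * κ) := by
    have : 1 + ρ * (lg - ε * κ) = (1 + ρ * lg) / 2 := by
      rw [hε]; field_simp; ring
    rw [this]; linarith
  have hexp := hL.tendsto_log_mul hρ hhalf
  set M : ℕ → ℝ := fun n => Real.exp (1 * Real.log n + L n * (lg - ε * κ)) / 2 with hMdef
  have hMlim : Tendsto M atTop atTop :=
    (Real.tendsto_exp_atTop.comp hexp).atTop_div_const (by norm_num)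
  have hLreal : Tendsto (fun n => (L n : ℝ)) atTop atTop :=
    tendsto_natCast_atTop_atTop.comp (hL.tendsto_atTop hρ)
  refine ⟨ε, ?_⟩
  have hbound : Tendsto (fun n => p * (1 - p) / (L n * ε ^ 2) + 4 / M n) atTop (nhds 0) := by
    rw [← add_zero (0 : ℝ)]
    exact (tendsto_const_nhds.div_atTop (hLreal.atTop_mul_const (by positivity))).add
      (tendsto_const_nhds.div_atTop hMlim)
  refine squeeze_zero' (Eventually.of_forall fun n => measureReal_nonneg) ?_ hbound
  filter_upwards [eventually_ge_atTop 2] with n hn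
  refine bad_prob_le ⟨hp.1.le, hp.2.le⟩ h1 h0 (hDS n hn) hn (hL.1 n).ne' hεpos
    (by positivity) ?_
  intro k hk hkL
  have hqpos := (succProb_pos_le h1 h0 (L n) k).1
  have hn2 : (2 : ℝ) ≤ n := by exact_mod_cast hn
  have hlogq := log_succProb h1 h0 p hk
  have hdev : -(ε * L n * κ) ≤ ((k : ℝ) - L n * p) * (Real.log Γ1 - Real.log Γ0) := by
    have : |((k : ℝ) - L n * p) * (Real.log Γ1 - Real.log Γ0)| ≤ ε * L n * κ := by
      rw [abs_mul]
      exact mul_le_mul_of_nonneg_right hkL.le hκpos.le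
    exact (abs_le.1 this).1
  have hge : Real.exp (1 * Real.log n + L n * (lg - ε * κ)) ≤ n * succProb Γ1 Γ0 (L n) k := by
    rw [← Real.exp_log (show 0 < n * succProb Γ1 Γ0 (L n) k by positivity)]
    rw [Real.exp_le_exp, Real.log_mul (by positivity) hqpos.ne', hlogq]
    nlinarith
  rw [Nat.cast_sub (by omega)]
  simp only [hMdef]
  push_cast
  nlinarith

lemma IsAdmissible.tendsto_inv_sqrt {ρ : ℝ} (hρ : 0 < ρ) {L : ℕ → ℕ} (hL : IsAdmissible ρ L)
    (C : ℝ) : Tendsto (fun n => C / √(L n)) atTop (nhds 0) :=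
  tendsto_const_nhds.div_atTop (Real.tendsto_sqrt_atTop.comp
    (tendsto_natCast_atTop_atTop.comp (hL.tendsto_atTop hρ)))

/-! ### Log-normal limit -/

/-- The logarithm of the transformed degree converges in distribution to `σ Z`: it differs from
the standardised `S` by `O(1/√L)` off the exceptional sets. -/
lemma log_degree_tendstoInDistribution {Ω : Type*} [MeasurableSpace Ω] (P : Measure Ω)
    [IsProbabilityMeasure P]
    {p Γ0 Γ1 : ℝ} (hp : p ∈ Set.Ioo (0 : ℝ) 1)
    (h0 : Γ0 ∈ Set.Ioo (0:ℝ) 1) (h1 : Γ1 ∈ Set.Ioo (0:ℝ) 1) {ρ : ℝ} (hρ : 0 < ρ)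
    (L : ℕ → ℕ) (hL : IsAdmissible ρ L) (D S : ℕ → Ω → ℕ)
    (hD : ∀ n, Measurable (D n)) (hS : ∀ n, Measurable (S n))
    (hDS : ∀ n, 2 ≤ n → IsCompoundBinomialPair P p (1 - p) Γ1 Γ0 n (L n) (D n) (S n))
    {ε : ℝ} (hbad : Tendsto (fun n => P.real {ω | Bad p Γ1 Γ0 ε n (L n) (D n ω, S n ω)}) atTop
      (nhds 0)) :
    TendstoInDistribution (fun n ω => (Real.log (D n ω) - Real.log n -
        L n * (p * Real.log Γ1 + (1 - p) * Real.log Γ0)) / √(L n)) atTop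
      (fun z : ℝ => √(p * (1 - p)) * (Real.log Γ1 - Real.log Γ0) * z)
      (fun _ => P) (gaussianReal 0 1) := by
  have hclt := clt_binomial P hp L (hL.tendsto_atTop hρ) S hS (by
    filter_upwards [eventually_ge_atTop 2] with n hn φ
    exact integral_comp_S ⟨hp.1.le, hp.2.le⟩ h1 h0 (hDS n hn) φ)
  have hT := hclt.continuous_comp
    (g := fun z : ℝ => √(p * (1 - p)) * (Real.log Γ1 - Real.log Γ0) * z) (by fun_prop)
  have hmeas : ∀ n, Measurable (fun ω => (Real.log (D n ω) - Real.log n -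
      L n * (p * Real.log Γ1 + (1 - p) * Real.log Γ0)) / √(L n)) := fun n => by
    have := hD n
    fun_prop
  refine tendstoInDistribution_of_tendstoInMeasure_sub _ _ hT ?_ fun n => (hmeas n).aemeasurable
  rw [tendstoInMeasure_iff_measureReal_norm]
  intro δ hδ
  refine squeeze_zero' (Eventually.of_forall fun n => measureReal_nonneg) ?_ hbad
  filter_upwards [eventually_ge_atTop 2,
    (hL.tendsto_inv_sqrt hρ (Real.log 4)).eventually_lt_const hδ] with n hn hnδ
  refine measureReal_mono ?_
  intro ω hω
  by_contra hgood
  simp only [Set.mem_ofPred_eq, Bad, not_or, not_lt, not_le] at hgood hω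
  obtain ⟨hkL, -, hdev⟩ := hgood
  have hn2 : (2 : ℝ) ≤ n := by exact_mod_cast hn
  rw [Nat.cast_sub (by omega : 1 ≤ n), Nat.cast_one] at hdev
  have hlog := (abs_log_le hn2 (succProb_pos_le h1 h0 (L n) (S n ω)).1 hdev).2
  rw [log_succProb h1 h0 p hkL] at hlog
  have hLpos : 0 < √(L n : ℝ) := Real.sqrt_pos.2 (by exact_mod_cast hL.1 n)
  have hspos : 0 < √(p * (1 - p)) := Real.sqrt_pos.2 (mul_pos hp.1 (by linarith [hp.2]))
  refine absurd hω (not_le.2 (lt_of_le_of_lt ?_ hnδ))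
  simp only [Pi.sub_apply, Function.comp_apply, Pi.zero_apply, sub_zero, Real.norm_eq_abs]
  rw [le_div_iff₀ hLpos, ← abs_of_pos hLpos, ← abs_mul, abs_of_pos hLpos]
  refine le_trans (le_of_eq ?_) hlog
  congr 1
  field_simp
  ring

/-- The theorem for `μ0 = 1 - p`, `μ1 = p` and everywhere measurable variables, with the powers
rewritten through logarithms. -/
lemma uniform_of_measurable {Ω : Type*} [MeasurableSpace Ω] (P : Measure Ω)
    [IsProbabilityMeasure P]
    {p Γ0 Γ1 : ℝ} (hp : p ∈ Set.Ioo (0 : ℝ) 1)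
    (h0 : Γ0 ∈ Set.Ioo (0:ℝ) 1) (h1 : Γ1 ∈ Set.Ioo (0:ℝ) 1) (hΓ : Γ0 ≠ Γ1) {ρ : ℝ} (hρ : 0 < ρ)
    (hcond : 0 < 1 + ρ * (p * Real.log Γ1 + (1 - p) * Real.log Γ0))
    (L : ℕ → ℕ) (hL : IsAdmissible ρ L) (D S : ℕ → Ω → ℕ)
    (hD : ∀ n, Measurable (D n)) (hS : ∀ n, Measurable (S n))
    (hDS : ∀ n, 2 ≤ n → IsCompoundBinomialPair P p (1 - p) Γ1 Γ0 n (L n) (D n) (S n)) :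
    Tendsto (fun n =>
        ⨆ x : {x : ℝ // 0 ≤ x},
          |P.real {ω | (D n ω : ℝ) ^ ((√(L n))⁻¹) *
              Real.exp (- √(L n) *
                ((((L n : ℝ) / Real.log n))⁻¹ +
                  (p * Real.log Γ1 + (1 - p) * Real.log Γ0))) ≤ x.1} -
           (gaussianReal 0 1).real
              {z | Real.exp (√(p * (1 - p)) * (Real.log Γ1 - Real.log Γ0) * z) ≤ x.1}|)
      atTop (nhds 0) := by
  obtain ⟨ε, hbad⟩ := exists_bad_tendsto P hp h0 h1 hΓ hρ hcond L hL D S hDS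
  have hdist := log_degree_tendstoInDistribution P hp h0 h1 hρ L hL D S hD hS hDS hbad
  set lg := p * Real.log Γ1 + (1 - p) * Real.log Γ0 with hlg
  set c := √(p * (1 - p)) * (Real.log Γ1 - Real.log Γ0) with hc
  have hc0 : c ≠ 0 := by
    have hne : Real.log Γ1 - Real.log Γ0 ≠ 0 := fun h =>
      hΓ (Real.log_injOn_pos h0.1 h1.1 (sub_eq_zero.1 h).symm)
    have : 0 < √(p * (1 - p)) := Real.sqrt_pos.2 (mul_pos hp.1 (by linarith [hp.2]))
    exact mul_ne_zero this.ne' hne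
  set R : ℕ → Ω → ℝ := fun n ω =>
    (Real.log (D n ω) - Real.log n - L n * lg) / √(L n) with hR
  have hRm : ∀ n, Measurable (R n) := fun n => by
    have := hD n
    simp only [hR]
    fun_prop
  set γ : Measure ℝ := (gaussianReal 0 1).map (fun z => c * z) with hγ
  have hγP : IsProbabilityMeasure γ := Measure.isProbabilityMeasure_map (by fun_prop)
  have hγ0 : ∀ t, γ {t} = 0 := by
    intro t
    rw [hγ, gaussianReal_map_const_mul]
    refine (nullSingletonClass_gaussianReal ?_).measure_singleton t
    rw [mul_one, ne_eq, ← NNReal.coe_eq_zero]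
    simpa using hc0
  have hcdf : ∀ t, cdf γ t = (gaussianReal 0 1).real {z | c * z ≤ t} := fun t => by
    rw [cdf_eq_real, hγ, map_measureReal_apply (by fun_prop) measurableSet_Iic]
    rfl
  have hpt : ∀ t, Tendsto (fun n => P.real {ω | R n ω ≤ t}) atTop (nhds (cdf γ t)) := by
    intro t
    have h := ProbabilityMeasure.tendsto_measure_of_null_frontier_of_tendsto' hdist.tendsto
      (E := Set.Iic t) (by
        change γ (frontier (Set.Iic t)) = 0
        rw [frontier_Iic]
        exact hγ0 t)
    have h' := (ENNReal.tendsto_toReal (measure_ne_top γ (Set.Iic t))).comp h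
    rw [cdf_eq_real]
    refine h'.congr fun n => ?_
    change (P.map (R n) (Set.Iic t)).toReal = _
    rw [Measure.map_apply (hRm n) measurableSet_Iic]
    rfl
  rw [Metric.tendsto_nhds]
  intro δ hδ
  have hpolya := polya (fun n t => P.real {ω | R n ω ≤ t}) (cdf γ)
    (fun n a b hab => measureReal_mono fun ω (hω : R n ω ≤ a) => hω.trans hab)
    (fun n t => measureReal_nonneg) (fun n t => measureReal_le_one) (monotone_cdf γ)
    (continuous_cdf_of_nullSingleton γ hγ0) (tendsto_cdf_atBot γ) (tendsto_cdf_atTop γ) hpt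
    (show 0 < δ / 4 by linarith)
  filter_upwards [hpolya, hbad.eventually_lt_const (show 0 < δ / 4 by linarith),
    eventually_ge_atTop 2] with n hn hbn hn2
  have hn2' : (2 : ℝ) ≤ n := by exact_mod_cast hn2
  have hLpos : 0 < √(L n : ℝ) := Real.sqrt_pos.2 (by exact_mod_cast hL.1 n)
  have hLsq : √(L n : ℝ) * √(L n) = L n := Real.mul_self_sqrt (by positivity)
  have hzero : P.real {ω | D n ω = 0} ≤ P.real {ω | Bad p Γ1 Γ0 ε n (L n) (D n ω, S n ω)} := by
    refine measureReal_mono fun ω hω => ?_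
    by_contra hgood
    simp only [Set.mem_ofPred_eq, Bad, not_or, not_lt, not_le] at hgood hω
    have hdev := hgood.2.2
    rw [Nat.cast_sub (by omega : 1 ≤ n), Nat.cast_one] at hdev
    have := (abs_log_le hn2' (succProb_pos_le h1 h0 (L n) (S n ω)).1 hdev).1
    simp [hω] at this
  set Y : Ω → ℝ := fun ω => (D n ω : ℝ) ^ ((√(L n : ℝ))⁻¹) *
    Real.exp (- √(L n : ℝ) * ((((L n : ℝ) / Real.log n))⁻¹ + lg)) with hY
  have hYR : ∀ ω, D n ω ≠ 0 → Y ω = Real.exp (R n ω) := by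
    intro ω hω
    have hDpos : (0 : ℝ) < D n ω := by positivity
    simp only [hY, hR]
    rw [Real.rpow_def_of_pos hDpos, ← Real.exp_add]
    congr 1
    have e1 : ((L n : ℝ) / Real.log n)⁻¹ = Real.log n / (√(L n : ℝ) * √(L n : ℝ)) := by
      rw [hLsq, inv_div]
    have e2 : (L n : ℝ) * lg = √(L n : ℝ) * √(L n : ℝ) * lg := by rw [hLsq]
    rw [e1, e2]
    field_simp
    ring
  have hY0 : ∀ ω, D n ω = 0 → Y ω = 0 := by
    intro ω hω
    simp [hY, hω, Real.zero_rpow (inv_ne_zero hLpos.ne')]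
  have main : ∀ x : {x : ℝ // 0 ≤ x}, |P.real {ω | Y ω ≤ x.1} -
      (gaussianReal 0 1).real {z | Real.exp (c * z) ≤ x.1}| ≤ δ / 2 := by
    rintro ⟨x, hx⟩
    rcases hx.eq_or_lt with rfl | hx
    · have e1 : {z : ℝ | Real.exp (c * z) ≤ 0} = ∅ := by
        ext z; simp [Real.exp_pos]
      have e2 : {ω | Y ω ≤ 0} ⊆ {ω | D n ω = 0} := by
        intro ω hω
        by_contra h
        simp only [Set.mem_ofPred_eq] at hω h
        rw [hYR ω h] at hω
        exact absurd hω (not_le.2 (Real.exp_pos _))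
      simp only [e1, measureReal_empty, sub_zero]
      rw [abs_of_nonneg measureReal_nonneg]
      have := measureReal_mono (μ := P) e2
      linarith
    · have e1 : {z : ℝ | Real.exp (c * z) ≤ x} = {z | c * z ≤ Real.log x} := by
        ext z; exact (Real.le_log_iff_exp_le hx).symm
      have hA : {ω | Y ω ≤ x} ⊆ {ω | R n ω ≤ Real.log x} ∪ {ω | D n ω = 0} := by
        intro ω hω
        by_cases h : D n ω = 0
        · exact Or.inr h
        · simp only [Set.mem_ofPred_eq] at hω
          rw [hYR ω h] at hω
          exact Or.inl ((Real.le_log_iff_exp_le hx).2 hω)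
      have hB : {ω | R n ω ≤ Real.log x} ⊆ {ω | Y ω ≤ x} ∪ {ω | D n ω = 0} := by
        intro ω hω
        by_cases h : D n ω = 0
        · exact Or.inr h
        · refine Or.inl ?_
          simp only [Set.mem_ofPred_eq] at hω ⊢
          rw [hYR ω h]
          exact (Real.le_log_iff_exp_le hx).1 hω
      have hA' := (measureReal_mono (μ := P) hA).trans (measureReal_union_le _ _)
      have hB' := (measureReal_mono (μ := P) hB).trans (measureReal_union_le _ _)
      have hnx := hn (Real.log x)
      rw [hcdf] at hnx
      simp only [e1]
      rw [abs_lt] at hnx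
      rw [abs_le]
      constructor <;> linarith
  rw [Real.dist_eq, sub_zero, abs_of_nonneg (Real.iSup_nonneg fun _ => abs_nonneg _)]
  exact lt_of_le_of_lt (Real.iSup_le main (by linarith)) (by linarith)

/-- uniform convergence of the distribution functions of the
transformed degrees to the log-normal distribution function. -/
theorem stmt6 {Ω : Type*} [MeasurableSpace Ω] (P : Measure Ω) [IsProbabilityMeasure P]
    (μ0 μ1 Γ0 Γ1 : ℝ) (hμ0 : μ0 ∈ Set.Ioo (0:ℝ) 1) (hμ1 : μ1 ∈ Set.Ioo (0:ℝ) 1)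
    (hμ : μ0 + μ1 = 1) (hΓ0 : Γ0 ∈ Set.Ioo (0:ℝ) 1) (hΓ1 : Γ1 ∈ Set.Ioo (0:ℝ) 1)
    (hΓ : Γ0 ≠ Γ1) (ρ : ℝ) (hρ : 0 < ρ)
    (hcond : 0 < 1 + ρ * Real.log (Γ1 ^ μ1 * Γ0 ^ μ0))
    (L : ℕ → ℕ) (hL : IsAdmissible ρ L)
    (D S : ℕ → Ω → ℕ)
    (hDS : ∀ n, 2 ≤ n → IsCompoundBinomialPair P μ1 μ0 Γ1 Γ0 n (L n) (D n) (S n)) :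
    Tendsto (fun n =>
        ⨆ x : {x : ℝ // 0 ≤ x},
          |(P {ω | (D n ω : ℝ) ^ ((Real.sqrt (L n))⁻¹) *
              Real.exp (- Real.sqrt (L n) *
                ((((L n : ℝ) / Real.log n))⁻¹ + Real.log (Γ1 ^ μ1 * Γ0 ^ μ0))) ≤ x.1}).toReal -
           (gaussianReal 0 1
              {z | Real.exp (Real.sqrt (μ0 * μ1) * Real.log (Γ1 / Γ0) * z) ≤ x.1}).toReal|)
      atTop (nhds 0) := by
  obtain rfl : μ0 = 1 - μ1 := by linarith
  have hlogG : Real.log (Γ1 ^ μ1 * Γ0 ^ (1 - μ1)) =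
      μ1 * Real.log Γ1 + (1 - μ1) * Real.log Γ0 := by
    rw [Real.log_mul (Real.rpow_pos_of_pos hΓ1.1 _).ne' (Real.rpow_pos_of_pos hΓ0.1 _).ne',
      Real.log_rpow hΓ1.1, Real.log_rpow hΓ0.1]
  rw [hlogG] at hcond
  -- nothing is assumed about `D n` and `S n` for `n < 2`, so they are replaced by `0` there
  have key := uniform_of_measurable P hμ1 hΓ0 hΓ1 hΓ hρ hcond L hL
    (fun n => if 2 ≤ n then D n else 0) (fun n => if 2 ≤ n then S n else 0)
    (fun n => by
      split_ifs with h
      exacts [(hDS n h).1, measurable_const])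
    (fun n => by
      split_ifs with h
      exacts [(hDS n h).2.1, measurable_const])
    (fun n h => by simpa only [if_pos h] using hDS n h)
  refine key.congr' ?_
  filter_upwards [eventually_ge_atTop 2] with n hn
  simp only [if_pos hn, hlogG, Real.log_div hΓ1.1.ne' hΓ0.1.ne', measureReal_def,
    mul_comm (1 - μ1) μ1]
end
end

section
/- Assume Γ(0) ≠ Γ(1) and 1 + ρ·ln(Γ(1)^{μ(1)} Γ(0)^{μ(0)}) > 0 for some ρ > 0, and let n ↦ L_n be a ρ-admissible scaling with associated sequence ρ_n. For each n ≥ 2 let (D_n, S_n) be a compound-binomial degree pair with parameters (n, L_n). Then for every real t, lim_{n→∞} P( D_n / n^{1 + ρ_n ln(Γ(1)^{μ(1)} Γ(0)^{μ(0)})} ≤ t ) equals 0 if t ≤ 0 and equals 1/2 if t > 0; equivalently, the ratios D_n / n^{1 + ρ_n ln(Γ(1)^{μ(1)} Γ(0)^{μ(0)})} converge weakly (as extended random variables) to the extended rv Λ with P(Λ = 0) = P(Λ = ∞) = 1/2. -/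
/-!
Write `p = μ1`, `c = ln Γ1 - ln Γ0`, `r = ln (Γ1^μ1 Γ0^μ0)` and `a = n e^{L r}`, which is the
normalisation `n^{1 + ρ_n r}`. The success probability of `D` given `S = ℓ` equals
`e^{L r + c (ℓ - L p)}`, so the conditional mean of `D` is, up to the factor `(n-1)/n`, equal to
`a e^{c (ℓ - L p)}`. The fluctuations of `c (S - L p)` are of order `√L → ∞` with a symmetric
limit, so this deviation lies below any constant with probability tending to `1/2`
(`tendsto_binomial_half`, from convergence of characteristic functions), and on the complementary
event it exceeds any constant with the same limiting probability.

Chernoff bounds for the binomial law (`binomial_real_le_le`, `binomial_real_lt_le`) show that `D`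
is of the order of its conditional mean. This yields `degree_le_bound` and `lt_degree_bound`:
up to errors exponentially small in `a → ∞`, the event `D ≤ t a` with `t > 0` lies between the
events `c (S - L p) ≤ K` for two constants `K`, both of which have probability tending to `1/2`.

For `t ≤ 0` the event is contained in `D = 0`. A deviation below `-δ L` has vanishing probability
(`tendsto_binomial_tail`), and outside it the conditional mean is at least of order
`n e^{L (r - δ)}`, which still tends to infinity when `δ` is small.
-/

open MeasureTheory ProbabilityTheory Filter Real
open scoped ENNReal NNReal

noncomputable section

/-! ### Chernoff bounds for the binomial law -/

lemma integral_exp_binomial (N : ℕ) (p : unitInterval) (θ : ℝ) :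
    ∫ k, rexp (θ * k) ∂(binomial N p) = (p * rexp θ + (1 - p)) ^ N := by
  rw [integral_binomial, ← Nat.range_succ_eq_Iic, add_pow]
  refine Finset.sum_congr rfl fun k _ => ?_
  rw [mul_pow, ← Real.exp_nat_mul, smul_eq_mul, mul_comm θ]
  ring

lemma mgf_binomial_le (N : ℕ) (p : unitInterval) (θ : ℝ) :
    mgf (fun k : ℕ => (k : ℝ)) (binomial N p) θ ≤ rexp (N * p * (rexp θ - 1)) := by
  rw [mgf, integral_exp_binomial, mul_assoc, Real.exp_nat_mul]
  have h0 : (0 : ℝ) ≤ p := p.2.1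
  have h1 : (p : ℝ) ≤ 1 := p.2.2
  refine pow_le_pow_left₀ (by have := Real.exp_pos θ; nlinarith) ?_ N
  have := Real.add_one_le_exp (p * (rexp θ - 1))
  linarith

lemma binomial_real_le_le (N : ℕ) (p : unitInterval) (x : ℝ) :
    (binomial N p).real {k | (k : ℝ) ≤ x} ≤ rexp (x - N * p / 2) := by
  have h := measure_le_le_exp_mul_mgf (μ := binomial N p) (X := fun k : ℕ => (k : ℝ)) x
    (t := -1) (by norm_num) (integrable_binomial _)
  refine h.trans ?_
  have hp : (0 : ℝ) ≤ p := p.2.1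
  have he : rexp (-1) ≤ 1 / 2 := by
    rw [Real.exp_neg, ← one_div]
    exact one_div_le_one_div_of_le two_pos (by linarith [Real.add_one_le_exp 1])
  calc _ ≤ rexp (- -1 * x) * rexp (N * p * (rexp (-1) - 1)) := by
        gcongr; exact mgf_binomial_le _ _ _
    _ = rexp (x + N * p * (rexp (-1) - 1)) := by rw [← Real.exp_add]; ring_nf
    _ ≤ _ := by
        gcongr
        have : (0 : ℝ) ≤ N * p := by positivity
        nlinarith

lemma binomial_real_lt_le (N : ℕ) (p : unitInterval) (x : ℝ) :
    (binomial N p).real {k | x < (k : ℝ)} ≤ rexp (2 * (N * p) - x) := by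
  have h := measure_ge_le_exp_mul_mgf (μ := binomial N p) (X := fun k : ℕ => (k : ℝ)) x
    (t := 1) (by norm_num) (integrable_binomial _)
  have hp : (0 : ℝ) ≤ p := p.2.1
  have he : rexp 1 ≤ 3 := by linarith [Real.exp_one_lt_d9]
  calc (binomial N p).real {k | x < (k : ℝ)}
      ≤ (binomial N p).real {k | x ≤ (k : ℝ)} := measureReal_mono fun k hk => le_of_lt hk.out
    _ ≤ rexp (-1 * x) * mgf (fun k : ℕ => (k : ℝ)) (binomial N p) 1 := h
    _ ≤ rexp (-1 * x) * rexp (N * p * (rexp 1 - 1)) := by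
        gcongr; exact mgf_binomial_le _ _ _
    _ = rexp (N * p * (rexp 1 - 1) - x) := by rw [← Real.exp_add]; ring_nf
    _ ≤ rexp (2 * (N * p) - x) := by
        have : (0 : ℝ) ≤ N * p := by positivity
        exact Real.exp_le_exp.2 (by nlinarith)

/-! ### Central limit theorem for the binomial law -/

/-- The map `k ↦ (c (k - L p) - K) / (s √L)`: the deviation of a `Bin(L, p)` count from its mean,
multiplied by `c`, shifted by `K` and scaled to unit variance when `s = |c| √(p (1 - p))`. The
shift is asymptotically negligible; carrying it along gives the limits for every `K` at once. -/
def stdBin (c K s p : ℝ) (L : ℕ) (k : ℕ) : ℝ := (√L)⁻¹ * ((c * (k - L * p) - K) / s)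

/-- The binomial theorem: up to the phase coming from the shift `K`, the characteristic function is
that of a sum of `L` independent centred Bernoulli variables, encoded through `Bin(1, p)`. -/
lemma charFun_stdBin (c K s : ℝ) (p : unitInterval) (L : ℕ) (t : ℝ) :
    charFun ((binomial L p).map (stdBin c K s p L)) t =
      (charFun ((binomial 1 p).map (fun k : ℕ => c * (k - p) / s)) ((√L)⁻¹ * t)) ^ L *
        Complex.exp (-((√L)⁻¹ * K / s * t : ℝ) * Complex.I) := by
  rw [charFun_apply_real, charFun_apply_real, integral_map .of_discrete (by fun_prop),
    integral_map .of_discrete (by fun_prop), integral_binomial, integral_binomial,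
    ← Nat.range_succ_eq_Iic, ← Nat.range_succ_eq_Iic, Finset.sum_range_succ (n := 1),
    Finset.sum_range_one, add_comm (_ • _), add_pow, Finset.sum_mul]
  refine Finset.sum_congr rfl fun k hk => ?_
  have hkL : k ≤ L := by simpa [Nat.lt_succ_iff] using hk
  simp only [stdBin, Complex.real_smul, mul_pow, ← Complex.exp_nat_mul]
  simp only [Nat.choose_zero_right, Nat.choose_self, Nat.cast_one, pow_zero, pow_one, Nat.sub_zero,
    Nat.sub_self, mul_one, one_mul, Nat.cast_zero]
  push_cast [Nat.cast_sub hkL]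
  -- `k` successes and `L - k` failures contribute one exponential each, the shift a third one.
  trans (L.choose k * (p : ℂ) ^ k * (1 - p) ^ (L - k)) *
    (Complex.exp (k * ((√L : ℂ)⁻¹ * t * (c * (1 - p) / s) * Complex.I)) *
      Complex.exp ((L - k) * ((√L : ℂ)⁻¹ * t * (c * (0 - p) / s) * Complex.I)) *
      Complex.exp (-((√L : ℂ)⁻¹ * K / s * t) * Complex.I))
  · rw [← Complex.exp_add, ← Complex.exp_add]
    congr 2
    ring
  · ring

open scoped Topology in
lemma tendsto_stdBin {c : ℝ} (hc : c ≠ 0) (K : ℝ) {p : unitInterval} (hp0 : 0 < (p : ℝ))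
    (hp1 : (p : ℝ) < 1) (y : ℝ) :
    Tendsto (fun L : ℕ => (binomial L p).real
      {k | stdBin c K (|c| * √(p * (1 - p))) p L k ≤ y}) atTop
      (𝓝 ((gaussianReal 0 1).real (Set.Iic y))) := by
  set s := |c| * √(p * (1 - p)) with hs
  have hpq : (0 : ℝ) < p * (1 - p) := mul_pos hp0 (by linarith)
  have hs0 : 0 < s := by have := abs_pos.2 hc; positivity
  have hs2 : s ^ 2 = c ^ 2 * (p * (1 - p)) := by
    rw [hs, mul_pow, sq_abs, Real.sq_sqrt hpq.le]
  have hconv : Tendsto (fun L : ℕ => (show ProbabilityMeasure ℝ from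
      ⟨(binomial L p).map (stdBin c K s p L), Measure.isProbabilityMeasure_map .of_discrete⟩)) atTop
      (𝓝 (show ProbabilityMeasure ℝ from ⟨gaussianReal 0 1, inferInstance⟩)) := by
    refine ProbabilityMeasure.tendsto_iff_tendsto_charFun.2 fun t ↦ ?_
    simp only [ProbabilityMeasure.coe_mk, charFun_stdBin]
    have h1 : Tendsto (fun L : ℕ =>
        Complex.exp (-((√L)⁻¹ * K / s * t : ℝ) * Complex.I)) atTop (𝓝 1) := by
      have h : Tendsto (fun L : ℕ => (√(L : ℝ))⁻¹) atTop (𝓝 0) :=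
        tendsto_inv_atTop_zero.comp (Real.tendsto_sqrt_atTop.comp tendsto_natCast_atTop_atTop)
      have hcont : Continuous fun x : ℝ => Complex.exp (-(x * K / s * t : ℝ) * Complex.I) := by
        fun_prop
      simpa [Function.comp_def] using (hcont.tendsto 0).comp h
    have h2 := tendsto_charFun_inv_sqrt_mul_pow (P := binomial 1 p)
      (X := fun k : ℕ => c * (k - p) / s) .of_discrete ?_ ?_ t
    · simpa [charFun_gaussianReal, neg_div] using h2.mul h1
    · rw [integral_binomial, ← Nat.range_succ_eq_Iic, Finset.sum_range_succ, Finset.sum_range_one]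
      simp
      ring
    · rw [integral_binomial, ← Nat.range_succ_eq_Iic, Finset.sum_range_succ, Finset.sum_range_one]
      have h1p : (1 : ℝ) - p ≠ 0 := by linarith
      simp only [Pi.pow_apply, div_pow, hs2]
      simp
      field_simp
      ring
  have h := ProbabilityMeasure.tendsto_measure_of_null_frontier_of_tendsto' hconv
    (E := Set.Iic y) (by
      have := nullSingletonClass_gaussianReal (μ := 0) (v := 1) one_ne_zero
      simp)
  have h' := (ENNReal.tendsto_toReal (measure_ne_top (gaussianReal 0 1) _)).comp h
  refine h'.congr fun L => ?_
  simp only [Function.comp, ProbabilityMeasure.coe_mk]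
  rw [Measure.map_apply .of_discrete measurableSet_Iic]
  rfl

lemma gaussian_half : (gaussianReal 0 1).real (Set.Iic 0) = 1 / 2 := by
  have := nullSingletonClass_gaussianReal (μ := 0) (v := 1) one_ne_zero
  have h1 : (gaussianReal 0 1).real (Set.Iic 0) = (gaussianReal 0 1).real (Set.Ici 0) := by
    have h := gaussianReal_map_neg (μ := 0) (v := 1)
    rw [neg_zero] at h
    conv_lhs => rw [← h]
    rw [map_measureReal_apply (by fun_prop) measurableSet_Iic]
    congr 1
    ext; simp
  have h2 := measureReal_compl (μ := gaussianReal 0 1) (measurableSet_Iic (a := (0:ℝ)))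
  rw [Set.compl_Iic, measureReal_congr (Ioi_ae_eq_Ici), ← h1] at h2
  simp at h2
  linarith

lemma stdBin_le_iff {c K s p y : ℝ} (hs : 0 < s) {L : ℕ} (hL : L ≠ 0) (k : ℕ) :
    stdBin c K s p L k ≤ y ↔ c * (k - L * p) ≤ K + y * (s * √L) := by
  have h : 0 < √(L : ℝ) := Real.sqrt_pos.2 (by positivity)
  rw [stdBin, inv_mul_le_iff₀ h, div_le_iff₀ hs, sub_le_iff_le_add]
  ring_nf

/-- The deviation from the mean lies on either side of any constant with asymptotic probability
`1/2`. -/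
lemma tendsto_binomial_half {c : ℝ} (hc : c ≠ 0) (K : ℝ) {p : unitInterval} (hp0 : 0 < (p : ℝ))
    (hp1 : (p : ℝ) < 1) :
    Tendsto (fun L : ℕ => (binomial L p).real {k | c * (k - L * p) ≤ K}) atTop (nhds (1 / 2)) := by
  rw [← gaussian_half]
  refine (tendsto_stdBin hc K hp0 hp1 0).congr' ?_
  filter_upwards [eventually_ne_atTop 0] with L hL
  have hs : 0 < |c| * √((p : ℝ) * (1 - p)) :=
    mul_pos (abs_pos.2 hc) (Real.sqrt_pos.2 (mul_pos hp0 (by linarith)))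
  simp [stdBin_le_iff hs hL]

/-- The weak law of large numbers, with a factor `c` of either sign. -/
lemma tendsto_binomial_tail {c : ℝ} (hc : c ≠ 0) {p : unitInterval} (hp0 : 0 < (p : ℝ))
    (hp1 : (p : ℝ) < 1) {δ : ℝ} (hδ : 0 < δ) :
    Tendsto (fun L : ℕ => (binomial L p).real {k | c * (k - L * p) ≤ -δ * L}) atTop (nhds 0) := by
  have hs : 0 < |c| * √((p : ℝ) * (1 - p)) :=
    mul_pos (abs_pos.2 hc) (Real.sqrt_pos.2 (mul_pos hp0 (by linarith)))
  refine tendsto_order.2 ⟨fun a ha => .of_forall fun L => ha.trans_le measureReal_nonneg,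
    fun ε hε => ?_⟩
  -- On the scale `√L` the threshold `-δ L` falls below every fixed quantile `y`.
  obtain ⟨y, hy⟩ := ((tendsto_cdf_atBot (gaussianReal 0 1)).eventually_lt_const hε).exists
  rw [cdf_eq_real] at hy
  have hsq : Tendsto (fun L : ℕ => √(L : ℝ)) atTop atTop :=
    Real.tendsto_sqrt_atTop.comp tendsto_natCast_atTop_atTop
  filter_upwards [(tendsto_stdBin hc 0 hp0 hp1 y).eventually_lt_const hy, eventually_ne_atTop 0,
    hsq.eventually_ge_atTop (-y * (|c| * √((p : ℝ) * (1 - p))) / δ)] with L hL hL0 hLs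
  refine lt_of_le_of_lt (measureReal_mono fun k hk => ?_) hL
  rw [Set.mem_ofPred_eq, stdBin_le_iff hs hL0]
  rw [div_le_iff₀ hδ] at hLs
  have h1 := Real.mul_self_sqrt (Nat.cast_nonneg (α := ℝ) L)
  have h2 := Real.sqrt_nonneg (L : ℝ)
  have h3 : c * (k - L * p) ≤ -δ * L := hk
  nlinarith [mul_le_mul_of_nonneg_right hLs h2]

/-! ### The law of the degree -/

/-- The law of `D` is the mixture over `ℓ ∼ Bin(L, p)` of `Bin(n - 1, g1^ℓ g0^(L - ℓ))`. The joint
pmf is prescribed only for `d ≤ n - 1` and `ℓ ≤ L`; the masses there already add up to one, so the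
joint law has no mass elsewhere. -/
lemma real_preimage_eq_integral {Ω : Type*} [MeasurableSpace Ω] {P : Measure Ω}
    [IsProbabilityMeasure P] {p g0 g1 : unitInterval} {n L : ℕ} {D S : Ω → ℕ}
    (h : IsCompoundBinomialPair P p (1 - p) g1 g0 n L D S) (A : Set ℕ) :
    P.real (D ⁻¹' A) =
      ∫ ℓ, (binomial (n - 1) (g1 ^ ℓ * g0 ^ (L - ℓ))).real A ∂(binomial L p) := by
  obtain ⟨hD, hS, hpmf⟩ := h
  let κ : Kernel ℕ ℕ := Kernel.ofFunOfCountable fun ℓ => binomial (n - 1) (g1 ^ ℓ * g0 ^ (L - ℓ))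
  have hκ (ℓ : ℕ) : κ ℓ = binomial (n - 1) (g1 ^ ℓ * g0 ^ (L - ℓ)) := rfl
  have : IsMarkovKernel κ := ⟨fun ℓ => by rw [hκ]; infer_instance⟩
  have hSD : Measurable fun ω => (S ω, D ω) := hS.prodMk hD
  have : IsProbabilityMeasure (P.map fun ω => (S ω, D ω)) :=
    Measure.isProbabilityMeasure_map hSD.aemeasurable
  -- Two probability measures with one dominated by the other coincide.
  have hle : binomial L p ⊗ₘ κ ≤ P.map fun ω => (S ω, D ω) := by
    refine Measure.le_iff.2 fun s hs => ?_
    rw [← Measure.tsum_indicator_apply_singleton _ s hs,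
      ← Measure.tsum_indicator_apply_singleton _ s hs]
    refine ENNReal.tsum_le_tsum fun q => Set.indicator_le_indicator ?_
    obtain ⟨ℓ, d⟩ := q
    rw [← Set.singleton_prod_singleton, Measure.compProd_apply_prod (by simp) (by simp),
      lintegral_singleton, hκ, binomial_singleton, binomial_singleton]
    by_cases hℓ : ℓ ≤ L
    · by_cases hd : d ≤ n - 1
      · rw [Measure.map_apply hSD (by simp)]
        have : (fun ω => (S ω, D ω)) ⁻¹' ({ℓ} ×ˢ {d}) = {ω | D ω = d ∧ S ω = ℓ} := by
          ext ω; simp [and_comm]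
        rw [this, hpmf d hd ℓ hℓ, ← ENNReal.ofReal_mul binomial_nonneg]
        refine le_of_eq (congrArg _ ?_)
        push_cast
        ring
      · simp [Nat.choose_eq_zero_of_lt (not_le.1 hd)]
    · simp [Nat.choose_eq_zero_of_lt (not_le.1 hℓ)]
  have heq := Measure.eq_of_le_of_isProbabilityMeasure hle
  have h1 : P (D ⁻¹' A) = ∫⁻ ℓ, κ ℓ A ∂(binomial L p) := by
    have h2 := Measure.compProd_apply_prod (μ := binomial L p) (κ := κ) (s := Set.univ) (t := A)
      .univ .of_discrete
    rw [heq, Measure.map_apply hSD (MeasurableSet.univ.prod .of_discrete)] at h2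
    simpa [Set.mk_preimage_prod] using h2
  rw [measureReal_def, h1, integral_eq_lintegral_of_nonneg_ae (.of_forall fun _ => by simp)
    .of_discrete]
  simp [hκ]

lemma integral_le_real_add {β : Measure ℕ} [IsProbabilityMeasure β] {f : ℕ → ℝ} {G : Set ℕ}
    {ε : ℝ} (h0 : ∀ k, 0 ≤ f k) (h1 : ∀ k, f k ≤ 1) (hε : 0 ≤ ε)
    (h : ∀ᵐ k ∂β, k ∉ G → f k ≤ ε) : ∫ k, f k ∂β ≤ β.real G + ε := by
  have hi : Integrable (G.indicator (fun _ => (1 : ℝ))) β :=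
    (integrable_const 1).indicator .of_discrete
  calc ∫ k, f k ∂β ≤ ∫ k, (G.indicator (fun _ => (1 : ℝ)) k + ε) ∂β := by
        refine integral_mono_of_nonneg (.of_forall h0) (hi.add (integrable_const ε)) ?_
        filter_upwards [h] with k hk
        by_cases hG : k ∈ G
        · simpa [hG] using (h1 k).trans (by linarith)
        · simpa [hG] using hk hG
    _ = β.real G + ε := by
        rw [integral_add hi (integrable_const ε), integral_indicator .of_discrete]
        simp

/-- The conditional edge probability as an exponential tilt of its typical value, in terms of the
deviation of `ℓ` from the mean `L μ`. -/
lemma pow_mul_pow_eq {μ Γ0 Γ1 : ℝ} (h0 : 0 < Γ0) (h1 : 0 < Γ1) {ℓ L : ℕ} (hℓ : ℓ ≤ L) :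
    Γ1 ^ ℓ * Γ0 ^ (L - ℓ) = rexp (L * Real.log (Γ1 ^ μ * Γ0 ^ (1 - μ)) +
      (Real.log Γ1 - Real.log Γ0) * (ℓ - L * μ)) := by
  rw [Real.log_mul (by positivity) (by positivity), Real.log_rpow h1, Real.log_rpow h0]
  trans rexp (ℓ * Real.log Γ1 + (L - ℓ : ℕ) * Real.log Γ0)
  · rw [Real.exp_add, Real.exp_nat_mul, Real.exp_nat_mul, Real.exp_log h1, Real.exp_log h0]
  · push_cast [Nat.cast_sub hℓ]
    ring_nf

section bounds
variable {Ω : Type*} [MeasurableSpace Ω] {P : Measure Ω}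
    [IsProbabilityMeasure P] {p g0 g1 : unitInterval} {n L : ℕ} {D S : Ω → ℕ}

/-- Unless `c (S - L p) ≤ y`, the conditional mean of `D` is at least `a e^y / 2`, so that `D ≤ x` is
exponentially unlikely. -/
lemma degree_le_bound (hg0 : 0 < (g0 : ℝ)) (hg1 : 0 < (g1 : ℝ)) (hn : 2 ≤ n)
    (h : IsCompoundBinomialPair P p (1 - p) g1 g0 n L D S) {a : ℝ}
    (ha : a = n * rexp (L * Real.log ((g1 : ℝ) ^ (p : ℝ) * (g0 : ℝ) ^ (1 - p : ℝ)))) (x y : ℝ) :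
    P.real {ω | (D ω : ℝ) ≤ x} ≤
      (binomial L p).real {k | (Real.log g1 - Real.log g0) * (k - L * p) ≤ y} +
        rexp (x - a * rexp y / 4) := by
  refine (real_preimage_eq_integral h {d | (d : ℝ) ≤ x}).trans_le ?_
  refine integral_le_real_add (fun _ => measureReal_nonneg) (fun _ => measureReal_le_one)
    (Real.exp_pos _).le ?_
  filter_upwards [ae_le_of_hasLaw_binomial (HasLaw.id (μ := binomial L p))] with k (hk : k ≤ L) hky
  refine (binomial_real_le_le _ _ _).trans (Real.exp_le_exp.2 ?_)
  have hn' : (n : ℝ) / 2 ≤ (n - 1 : ℕ) := by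
    have : (2 : ℝ) ≤ n := by exact_mod_cast hn
    push_cast [Nat.cast_sub (show 1 ≤ n by omega)]
    linarith
  have hq : a * rexp y ≤ n * (g1 ^ k * g0 ^ (L - k) : unitInterval) := by
    push_cast
    rw [pow_mul_pow_eq (μ := p) hg0 hg1 hk, ha, mul_assoc, ← Real.exp_add]
    gcongr
    simpa using (not_le.1 hky).le
  have := mul_le_mul_of_nonneg_right hn' (g1 ^ k * g0 ^ (L - k) : unitInterval).2.1
  linarith

/-- Unless `c (S - L p) > y`, the conditional mean of `D` is at most `a e^y`, so that `D > x` is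
exponentially unlikely. -/
lemma lt_degree_bound (hg0 : 0 < (g0 : ℝ)) (hg1 : 0 < (g1 : ℝ)) (hn : 2 ≤ n)
    (h : IsCompoundBinomialPair P p (1 - p) g1 g0 n L D S) {a : ℝ}
    (ha : a = n * rexp (L * Real.log ((g1 : ℝ) ^ (p : ℝ) * (g0 : ℝ) ^ (1 - p : ℝ)))) (x y : ℝ) :
    P.real {ω | x < (D ω : ℝ)} ≤
      (binomial L p).real {k | y < (Real.log g1 - Real.log g0) * (k - L * p)} +
        rexp (2 * (a * rexp y) - x) := by
  refine (real_preimage_eq_integral h {d | x < (d : ℝ)}).trans_le ?_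
  refine integral_le_real_add (fun _ => measureReal_nonneg) (fun _ => measureReal_le_one)
    (Real.exp_pos _).le ?_
  filter_upwards [ae_le_of_hasLaw_binomial (HasLaw.id (μ := binomial L p))] with k (hk : k ≤ L) hky
  refine (binomial_real_lt_le _ _ _).trans (Real.exp_le_exp.2 ?_)
  have hn' : ((n - 1 : ℕ) : ℝ) ≤ n := by exact_mod_cast Nat.sub_le n 1
  have hq : (n : ℝ) * (g1 ^ k * g0 ^ (L - k) : unitInterval) ≤ a * rexp y := by
    push_cast
    rw [pow_mul_pow_eq (μ := p) hg0 hg1 hk, ha, mul_assoc, ← Real.exp_add]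
    gcongr
    simpa using not_lt.1 hky
  have := mul_le_mul_of_nonneg_right hn' (g1 ^ k * g0 ^ (L - k) : unitInterval).2.1
  linarith

end bounds

/-! ### Growth of the normalisation -/

lemma IsAdmissible.tendsto_div_log {ρ : ℝ} (hρ : 0 < ρ) {L : ℕ → ℕ} (hL : IsAdmissible ρ L) :
    Tendsto (fun n => (L n : ℝ) / Real.log n) atTop (nhds ρ) := by
  have h := hL.2.const_mul ρ
  rw [mul_one] at h
  refine h.congr fun n => ?_
  rw [mul_comm ρ (Real.log n), ← div_div, mul_div_cancel₀ _ hρ.ne']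

lemma tendsto_log_nat : Tendsto (fun n : ℕ => Real.log n) atTop atTop :=
  Real.tendsto_log_atTop.comp tendsto_natCast_atTop_atTop

lemma IsAdmissible.tendsto_mul_exp {ρ : ℝ} (hρ : 0 < ρ) {L : ℕ → ℕ} (hL : IsAdmissible ρ L)
    {r : ℝ} (hr : 0 < 1 + ρ * r) :
    Tendsto (fun n : ℕ => n * rexp (L n * r)) atTop atTop := by
  have h := Real.tendsto_exp_atTop.comp
    (tendsto_log_nat.atTop_mul_pos hr (((hL.tendsto_div_log hρ).mul_const r).const_add 1))
  refine h.congr' ?_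
  filter_upwards [tendsto_log_nat.eventually_gt_atTop 0, eventually_gt_atTop 0] with n hn hn0
  have hn0' : (0 : ℝ) < n := by exact_mod_cast hn0
  rw [Function.comp, mul_add, mul_one, Real.exp_add, Real.exp_log hn0']
  congr 2
  field_simp

lemma natCast_rpow_one_add {n : ℕ} (hn : 2 ≤ n) (L r : ℝ) :
    (n : ℝ) ^ (1 + L / Real.log n * r) = n * rexp (L * r) := by
  have hn0 : (0 : ℝ) < n := by positivity
  have hlog : Real.log n ≠ 0 := (Real.log_pos (by exact_mod_cast hn)).ne'
  rw [Real.rpow_add hn0, Real.rpow_one, Real.rpow_def_of_pos hn0]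
  congr 2
  field_simp

/-! ### Convergence of the distribution functions -/

/-- the ratios `D_n / n^{1 + ρ_n ln(Γ1^μ1 Γ0^μ0)}` converge weakly to
the extended rv `Λ` with `P(Λ = 0) = P(Λ = ∞) = 1/2`: the limiting distribution
function is `0` for `t ≤ 0` and `1/2` for `t > 0`. -/
theorem stmt7 {Ω : Type*} [MeasurableSpace Ω] (P : Measure Ω) [IsProbabilityMeasure P]
    (μ0 μ1 Γ0 Γ1 : ℝ) (hμ0 : μ0 ∈ Set.Ioo (0:ℝ) 1) (hμ1 : μ1 ∈ Set.Ioo (0:ℝ) 1)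
    (hμ : μ0 + μ1 = 1) (hΓ0 : Γ0 ∈ Set.Ioo (0:ℝ) 1) (hΓ1 : Γ1 ∈ Set.Ioo (0:ℝ) 1)
    (hΓ : Γ0 ≠ Γ1) (ρ : ℝ) (hρ : 0 < ρ)
    (hcond : 0 < 1 + ρ * Real.log (Γ1 ^ μ1 * Γ0 ^ μ0))
    (L : ℕ → ℕ) (hL : IsAdmissible ρ L)
    (D S : ℕ → Ω → ℕ)
    (hDS : ∀ n, 2 ≤ n → IsCompoundBinomialPair P μ1 μ0 Γ1 Γ0 n (L n) (D n) (S n)) :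
    ∀ t : ℝ,
      Tendsto (fun n =>
          (P {ω | (D n ω : ℝ) /
              (n : ℝ) ^ (1 + ((L n : ℝ) / Real.log n) * Real.log (Γ1 ^ μ1 * Γ0 ^ μ0)) ≤ t}).toReal)
        atTop (nhds (if t ≤ 0 then 0 else 1 / 2)) := by
  obtain ⟨p, rfl⟩ : ∃ p : unitInterval, (p : ℝ) = μ1 := ⟨⟨μ1, hμ1.1.le, hμ1.2.le⟩, rfl⟩
  obtain ⟨g0, rfl⟩ : ∃ g : unitInterval, (g : ℝ) = Γ0 := ⟨⟨Γ0, hΓ0.1.le, hΓ0.2.le⟩, rfl⟩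
  obtain ⟨g1, rfl⟩ : ∃ g : unitInterval, (g : ℝ) = Γ1 := ⟨⟨Γ1, hΓ1.1.le, hΓ1.2.le⟩, rfl⟩
  obtain rfl : μ0 = 1 - p := by linarith
  set r := Real.log ((g1 : ℝ) ^ (p : ℝ) * (g0 : ℝ) ^ (1 - p : ℝ)) with hr
  set c := Real.log (g1 : ℝ) - Real.log g0 with hc
  have hc0 : c ≠ 0 := fun h => hΓ (Real.log_injOn_pos hΓ0.1 hΓ1.1 (sub_eq_zero.1 h).symm)
  have hLtop := hL.tendsto_atTop hρ
  have ha := hL.tendsto_mul_exp hρ hcond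
  have hF (t : ℝ) (n : ℕ) (hn : 2 ≤ n) :
      (P {ω | (D n ω : ℝ) / (n : ℝ) ^ (1 + ((L n : ℝ) / Real.log n) * r) ≤ t}).toReal =
        P.real {ω | (D n ω : ℝ) ≤ t * (n * rexp (L n * r))} := by
    have : 0 < n * rexp (L n * r) := mul_pos (by positivity) (Real.exp_pos _)
    simp only [natCast_rpow_one_add hn, div_le_iff₀ this, measureReal_def]
  intro t
  split_ifs with ht
  · -- Half of the slack in `hcond` is spent on `δ`.
    obtain ⟨δ, hδ, hδr⟩ : ∃ δ > 0, 0 < 1 + ρ * (r - δ) := by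
      refine ⟨(1 + ρ * r) / (2 * ρ), by positivity, ?_⟩
      field_simp
      linarith
    have hlim := ((tendsto_binomial_tail hc0 hμ1.1 hμ1.2 hδ).comp hLtop).add
      (Real.tendsto_exp_atBot.comp ((hL.tendsto_mul_exp hρ hδr).atTop_mul_const_of_neg
        (show (-1 / 4 : ℝ) < 0 by norm_num)))
    rw [add_zero] at hlim
    refine squeeze_zero' (.of_forall fun n => ENNReal.toReal_nonneg) ?_ hlim
    filter_upwards [eventually_ge_atTop 2] with n hn
    rw [hF t n hn]
    calc P.real {ω | (D n ω : ℝ) ≤ t * (n * rexp (L n * r))}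
        ≤ P.real {ω | (D n ω : ℝ) ≤ 0} := by
          refine measureReal_mono fun ω hω => le_trans (Set.mem_ofPred.1 hω) ?_
          exact mul_nonpos_of_nonpos_of_nonneg ht (by positivity)
      _ ≤ _ := degree_le_bound hΓ0.1 hΓ1.1 hn (hDS n hn) rfl 0 (-δ * L n)
      _ = _ := by
          simp only [Function.comp]
          congr 2
          rw [← hr, mul_assoc, ← Real.exp_add]
          ring_nf
  · push Not at ht
    -- The thresholds `ln (4 (t + 1))` and `ln (t / 4)` turn the two error exponents into
    -- `-a` and `-a t / 2`.
    have hup := ((tendsto_binomial_half hc0 (Real.log (4 * (t + 1))) hμ1.1 hμ1.2).comp hLtop).add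
      (Real.tendsto_exp_atBot.comp (tendsto_neg_atTop_atBot.comp ha))
    have hlow := ((tendsto_binomial_half hc0 (Real.log (t / 4)) hμ1.1 hμ1.2).comp hLtop).sub
      (Real.tendsto_exp_atBot.comp (ha.atTop_mul_const_of_neg (show -t / 2 < 0 by linarith)))
    rw [add_zero] at hup
    rw [sub_zero] at hlow
    refine tendsto_of_tendsto_of_tendsto_of_le_of_le' hlow hup ?_ ?_
    · filter_upwards [eventually_ge_atTop 2] with n hn
      rw [hF t n hn]
      have h1 := lt_degree_bound hΓ0.1 hΓ1.1 hn (hDS n hn) rfl (t * (n * rexp (L n * r)))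
        (Real.log (t / 4))
      have hD : MeasurableSet {ω | (D n ω : ℝ) ≤ t * (n * rexp (L n * r))} :=
        (hDS n hn).1 (t := {d | (d : ℝ) ≤ t * (n * rexp (L n * r))}) .of_discrete
      have h2 := probReal_compl_eq_one_sub (μ := P) hD
      have h3 := probReal_compl_eq_one_sub (μ := binomial (L n) p)
        (s := {k | c * (k - L n * p) ≤ Real.log (t / 4)}) .of_discrete
      simp only [Set.compl_ofPred, not_le] at h2 h3
      rw [h2, h3, ← hr, Real.exp_log (by positivity)] at h1
      have h4 : 2 * (n * rexp (L n * r) * (t / 4)) - t * (n * rexp (L n * r)) =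
        n * rexp (L n * r) * (-t / 2) := by ring
      rw [h4] at h1
      simp only [Function.comp]
      linarith
    · filter_upwards [eventually_ge_atTop 2] with n hn
      rw [hF t n hn]
      refine (degree_le_bound hΓ0.1 hΓ1.1 hn (hDS n hn) rfl _ (Real.log (4 * (t + 1)))).trans_eq ?_
      rw [← hr, Real.exp_log (by positivity)]
      simp only [Function.comp]
      congr 2
      ring
end
end

section
/- Assume Γ(0) ≠ Γ(1) and 1 + ρ·ln(Γ(1)^{μ(1)} Γ(0)^{μ(0)}) > 0 for some ρ > 0, and let n ↦ L_n be a ρ-admissible scaling with associated sequence ρ_n. For each n ≥ 2 let (D_n, S_n) be a compound-binomial degree pair with parameters (n, L_n), and for t > 0 set x_n(t) = ( t · n^{−(1 + ρ_n ln(Γ(1)^{μ(1)} Γ(0)^{μ(0)}))} )^{1/√L_n}. Then the log-normal pmf approximation holds uniformly in d: lim_{n→∞} sup_{d = 1, 2, …} | P(D_n = d) − ( Φ( ln x_n(d) / |σ| ) − Φ( ln x_n(d−1) / |σ| ) ) | = 0, where Φ is the standard Gaussian distribution function, σ = √(μ(0)μ(1)) · ln(Γ(1)/Γ(0)), and Φ(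 ln x_n(0) / |σ| ) is interpreted as 0. -/
/-!
Both the point masses of `D_n` and the increments of the Gaussian distribution function tend to `0`
uniformly in `d ≥ 1`, so their difference does too.

Point masses. A `Bin(m,p)` mass is at most `1 / √((m+1) p (1-p))` (`binPmf_le`): the difference of
consecutive masses is the centred `Bin(m+1,p)` mass divided by the variance, and telescoping leaves
a first absolute central moment over a variance. Given `S_n = ℓ`, the degree is
`Bin(n-1, Γ1^ℓ Γ0^(L-ℓ))`. Chebyshev's inequality keeps `ℓ` within `ε L_n` of `μ1 L_n` up to
probability `1 / (ε² L_n)`, and for such `ℓ` the expected degree is at least of order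
`n^(1 + ρ_n (λ - ε |log (Γ1/Γ0)|))`, with `λ = log (Γ1^μ1 Γ0^μ0)`. As `1 + ρ λ > 0`, this is a
positive power of `n` for suitable `ε`, and the mixture of masses vanishes (`mixture_le`).

Gaussian increments. For `d ≥ 2`, `Φ` is `1`-Lipschitz and
`log x_n(d) - log x_n(d-1) = log (d/(d-1)) / √L_n ≤ log 2 / √L_n`. For `d = 1` the increment is
`Φ(log x_n(1)/|σ|)`, where `log x_n(1) = -(1 + ρ_n λ) log n / √L_n → -∞`.
-/

open MeasureTheory ProbabilityTheory Filter Real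
open scoped ENNReal NNReal

noncomputable section

/-! ### Binomial point masses -/

/-- The binomial point mass `C(m,k) p^k (1-p)^(m-k)`; it is `0` for `k > m`. -/
def binPmf (m : ℕ) (p : ℝ) (k : ℕ) : ℝ := (m.choose k : ℝ) * p ^ k * (1 - p) ^ (m - k)

lemma binPmf_nonneg (m : ℕ) {p : ℝ} (h0 : 0 ≤ p) (h1 : p ≤ 1) (k : ℕ) : 0 ≤ binPmf m p k := by
  have : 0 ≤ 1 - p := by linarith
  unfold binPmf
  positivity

lemma sum_binPmf (m : ℕ) (p : ℝ) : ∑ k ∈ Finset.range (m + 1), binPmf m p k = 1 := by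
  have h := add_pow p (1 - p) m
  rw [add_sub_cancel, one_pow] at h
  rw [h]
  refine Finset.sum_congr rfl fun k _ => ?_
  unfold binPmf
  ring

lemma sum_sq_binPmf (m : ℕ) (p : ℝ) :
    ∑ k ∈ Finset.range (m + 1), ((k : ℝ) - m * p) ^ 2 * binPmf m p k = m * p * (1 - p) := by
  have h := congrArg (Polynomial.eval p) (bernsteinPolynomial.variance ℝ m)
  simp only [Polynomial.eval_finsetSum, bernsteinPolynomial, Polynomial.eval_mul,
    Polynomial.eval_pow, Polynomial.eval_sub, Polynomial.eval_X, Polynomial.eval_one,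
    Polynomial.eval_natCast, nsmul_eq_mul] at h
  rw [← h]
  refine Finset.sum_congr rfl fun k _ => ?_
  unfold binPmf
  ring

/-- Consecutive differences of the binomial mass function, expressed through the centred
binomial weights with one more trial. -/
lemma binPmf_sub_succ {m k : ℕ} (hk : k ≤ m) {p : ℝ} (h0 : 0 < p) (h1 : p < 1) :
    binPmf m p k - binPmf m p (k + 1) =
      ((k + 1 : ℕ) - (m + 1 : ℕ) * p) * binPmf (m + 1) p (k + 1) /
        ((m + 1 : ℕ) * p * (1 - p)) := by
  have hq : (1 - p) ≠ 0 := by linarith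
  have hp : p ≠ 0 := h0.ne'
  have hm : ((m : ℝ) + 1) ≠ 0 := by positivity
  have e1 : ((m : ℝ) + 1) * m.choose k = ((m + 1).choose (k + 1) : ℝ) * (k + 1) := by
    exact_mod_cast Nat.add_one_mul_choose_eq m k
  have e2 : ((m + 1).choose (k + 1) : ℝ) = m.choose k + m.choose (k + 1) := by
    exact_mod_cast Nat.choose_succ_succ m k
  rw [eq_div_iff (by push_cast; positivity)]
  unfold binPmf
  rw [e2] at e1 ⊢
  rcases hk.eq_or_lt with rfl | hlt
  · simp at e1 ⊢
    ring
  · obtain ⟨j, rfl⟩ := Nat.exists_eq_add_of_lt hlt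
    have a1 : k + j + 1 - k = j + 1 := by omega
    have a2 : k + j + 1 - (k + 1) = j := by omega
    have a3 : k + j + 1 + 1 - (k + 1) = j + 1 := by omega
    rw [a1, a2, a3]
    push_cast at e1 ⊢
    linear_combination (p ^ (k + 1) * (1 - p) ^ (j + 1)) * e1

/-- A uniform bound on binomial point masses: telescoping down from `k = m + 1`, each mass is at
most the first absolute central moment of `Bin(m+1,p)` divided by its variance. -/
lemma binPmf_le (m : ℕ) {p : ℝ} (h0 : 0 < p) (h1 : p < 1) (d : ℕ) :
    binPmf m p d ≤ 1 / √((m + 1 : ℕ) * p * (1 - p)) := by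
  have hq : 0 < 1 - p := by linarith
  set V : ℝ := (m + 1 : ℕ) * p * (1 - p) with hV
  have hVpos : 0 < V := by rw [hV]; positivity
  set s := √V with hs
  have hspos : 0 < s := Real.sqrt_pos.2 hVpos
  have hss : s ^ 2 = V := Real.sq_sqrt hVpos.le
  rcases lt_or_ge m d with hd | hd
  · have : binPmf m p d = 0 := by simp [binPmf, Nat.choose_eq_zero_of_lt hd]
    rw [this]
    positivity
  have htel : binPmf m p d =
      ∑ k ∈ Finset.Ico d (m + 1), (binPmf m p k - binPmf m p (k + 1)) := by
    rw [Finset.sum_Ico_eq_sub _ (by omega : d ≤ m + 1), Finset.sum_range_sub',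
      Finset.sum_range_sub']
    have : binPmf m p (m + 1) = 0 := by simp [binPmf]
    rw [this]
    ring
  -- AM-GM with weight `s` replaces the Cauchy-Schwarz inequality
  have key : ∀ k ∈ Finset.range (m + 1), |binPmf m p k - binPmf m p (k + 1)| ≤
      (((k + 1 : ℕ) - (m + 1 : ℕ) * p) ^ 2 * binPmf (m + 1) p (k + 1) / s
        + s * binPmf (m + 1) p (k + 1)) / (2 * V) := by
    intro k hk
    rw [binPmf_sub_succ (by simpa [Nat.lt_succ_iff] using hk) h0 h1, ← hV, abs_div,
      abs_of_pos hVpos, abs_mul, abs_of_nonneg (binPmf_nonneg (m + 1) h0.le h1.le (k + 1))]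
    have hb := binPmf_nonneg (m + 1) h0.le h1.le (k + 1)
    set b := binPmf (m + 1) p (k + 1)
    set y : ℝ := (k + 1 : ℕ) - (m + 1 : ℕ) * p
    have hy : |y| ≤ (y ^ 2 / s + s) / 2 := by
      rw [le_div_iff₀ two_pos, ← sub_nonneg]
      have : y ^ 2 / s + s - |y| * 2 = (|y| - s) ^ 2 / s := by
        rw [← sq_abs y]; field_simp; ring
      rw [this]
      positivity
    calc |y| * b / V ≤ (y ^ 2 / s + s) / 2 * b / V := by gcongr
      _ = (y ^ 2 * b / s + s * b) / (2 * V) := by field_simp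
  calc binPmf m p d ≤ ∑ k ∈ Finset.Ico d (m + 1), |binPmf m p k - binPmf m p (k + 1)| := by
        rw [htel]; exact Finset.sum_le_sum fun k _ => le_abs_self _
    _ ≤ ∑ k ∈ Finset.range (m + 1), |binPmf m p k - binPmf m p (k + 1)| := by
        refine Finset.sum_le_sum_of_subset_of_nonneg ?_ fun _ _ _ => abs_nonneg _
        intro k hk
        simp at hk ⊢
        omega
    _ ≤ _ := Finset.sum_le_sum key
    _ ≤ ∑ k ∈ Finset.range (m + 1 + 1), (((k : ℝ) - (m + 1 : ℕ) * p) ^ 2 * binPmf (m + 1) p k / s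
        + s * binPmf (m + 1) p k) / (2 * V) := by
        rw [Finset.sum_range_succ' _ (m + 1)]
        have hb := binPmf_nonneg (m + 1) h0.le h1.le 0
        have : 0 ≤ ((((0 : ℕ) : ℝ) - (m + 1 : ℕ) * p) ^ 2 * binPmf (m + 1) p 0 / s
          + s * binPmf (m + 1) p 0) / (2 * V) := by positivity
        linarith
    _ = 1 / s := by
        rw [← Finset.sum_div, Finset.sum_add_distrib, ← Finset.sum_div, ← Finset.mul_sum,
          sum_sq_binPmf, sum_binPmf, ← hV, ← hss]
        field_simp
        norm_num

/-! ### The Gaussian distribution function -/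

lemma gauss_integrable : Integrable (fun t : ℝ => rexp (-t ^ 2 / 2) / √(2 * π)) := by
  have h := (integrable_exp_neg_mul_sq (b := 1 / 2) (by norm_num)).div_const (√(2 * π))
  refine h.congr (Eventually.of_forall fun t => ?_)
  simp only
  congr 2
  ring

lemma Phi_eq_cdf (z : ℝ) : Phi z = cdf (gaussianReal 0 1) z := by
  rw [cdf_eq_real, measureReal_def, gaussianReal_apply_eq_integral 0 one_ne_zero,
    ENNReal.toReal_ofReal (integral_nonneg fun t => gaussianPDFReal_nonneg _ _ _)]
  unfold Phi
  congr 1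
  ext t
  simp [gaussianPDFReal]
  ring

lemma Phi_lipschitz (a b : ℝ) : |Phi b - Phi a| ≤ |b - a| := by
  unfold Phi
  rw [intervalIntegral.integral_Iic_sub_Iic gauss_integrable.integrableOn
    gauss_integrable.integrableOn]
  have h : ∀ t ∈ Set.uIoc a b, ‖rexp (-t ^ 2 / 2) / √(2 * π)‖ ≤ 1 := by
    intro t _
    rw [Real.norm_of_nonneg (by positivity)]
    have h1 : (1 : ℝ) ≤ √(2 * π) := by
      rw [Real.one_le_sqrt]; linarith [Real.pi_gt_three]
    refine div_le_one_of_le₀ (le_trans ?_ h1) (by positivity)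
    rw [Real.exp_le_one_iff]
    nlinarith [sq_nonneg t]
  have h2 := intervalIntegral.norm_integral_le_of_norm_le_const h
  rwa [one_mul, Real.norm_eq_abs] at h2

lemma tendsto_Phi_atBot : Tendsto Phi atBot (nhds 0) := by
  rw [show Phi = _ from funext Phi_eq_cdf]
  exact tendsto_cdf_atBot _

/-! ### The compound-binomial mixture -/

/-- The joint masses exhaust the total probability, so the marginal of `D` is dominated by the
binomial mixture, also for degrees `d ≥ n`, where the marginal vanishes. -/
lemma pmf_le_mixture {Ω : Type*} [MeasurableSpace Ω] (P : Measure Ω) [IsProbabilityMeasure P]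
    {μ0 μ1 Γ0 Γ1 : ℝ} (hμ1 : μ1 ∈ Set.Ioo (0:ℝ) 1)
    (hμ : μ0 + μ1 = 1) (hΓ0 : Γ0 ∈ Set.Ioo (0:ℝ) 1) (hΓ1 : Γ1 ∈ Set.Ioo (0:ℝ) 1)
    {n L : ℕ} {D S : Ω → ℕ} (hDS : IsCompoundBinomialPair P μ1 μ0 Γ1 Γ0 n L D S) (d : ℕ) :
    (P {ω | D ω = d}).toReal ≤ ∑ ℓ ∈ Finset.range (L + 1),
      binPmf L μ1 ℓ * binPmf (n - 1) (Γ1 ^ ℓ * Γ0 ^ (L - ℓ)) d := by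
  obtain ⟨hD, hS, hjoint⟩ := hDS
  obtain ⟨hμ1a, hμ1b⟩ := hμ1
  obtain ⟨hΓ0a, hΓ0b⟩ := hΓ0
  obtain ⟨hΓ1a, hΓ1b⟩ := hΓ1
  have hp0 : ∀ ℓ : ℕ, 0 ≤ Γ1 ^ ℓ * Γ0 ^ (L - ℓ) := fun ℓ => by positivity
  have hp1 : ∀ ℓ : ℕ, Γ1 ^ ℓ * Γ0 ^ (L - ℓ) ≤ 1 := fun ℓ =>
    mul_le_one₀ (pow_le_one₀ hΓ1a.le hΓ1b.le) (by positivity) (pow_le_one₀ hΓ0a.le hΓ0b.le)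
  set w : ℕ → ℕ → ℝ := fun ℓ k => binPmf L μ1 ℓ * binPmf (n - 1) (Γ1 ^ ℓ * Γ0 ^ (L - ℓ)) k with hw
  have hw0 : ∀ ℓ k, 0 ≤ w ℓ k := fun ℓ k =>
    mul_nonneg (binPmf_nonneg _ hμ1a.le hμ1b.le _) (binPmf_nonneg _ (hp0 ℓ) (hp1 ℓ) _)
  have hmeas : ∀ k ℓ : ℕ, MeasurableSet {ω | D ω = k ∧ S ω = ℓ} := fun k ℓ =>
    (hD (measurableSet_singleton k)).inter (hS (measurableSet_singleton ℓ))
  have hjoint' : ∀ k ≤ n - 1, ∀ ℓ ≤ L, P {ω | D ω = k ∧ S ω = ℓ} = ENNReal.ofReal (w ℓ k) := by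
    intro k hk ℓ hℓ
    rw [hjoint k hk ℓ hℓ, hw]
    have : μ0 = 1 - μ1 := by linarith
    rw [this]
    congr 1
    simp only [binPmf]
    ring
  set A : Set Ω := ⋃ x ∈ Finset.range (L + 1) ×ˢ Finset.range (n - 1 + 1),
    {ω | D ω = x.2 ∧ S ω = x.1} with hA
  have hAm : MeasurableSet A := Finset.measurableSet_biUnion _ fun x _ => hmeas _ _
  have hPA : P A = 1 := by
    rw [hA, measure_biUnion_finset]
    · have hcongr : ∀ x ∈ Finset.range (L + 1) ×ˢ Finset.range (n - 1 + 1),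
          P {ω | D ω = x.2 ∧ S ω = x.1} = ENNReal.ofReal (w x.1 x.2) := by
        intro x hx
        simp only [Finset.mem_product, Finset.mem_range] at hx
        exact hjoint' x.2 (by omega) x.1 (by omega)
      rw [Finset.sum_congr rfl hcongr,
        ← ENNReal.ofReal_sum_of_nonneg (fun x _ => hw0 _ _), Finset.sum_product]
      simp_rw [hw, ← Finset.mul_sum, sum_binPmf, mul_one, sum_binPmf, ENNReal.ofReal_one]
    · rintro ⟨a, b⟩ _ ⟨a', b'⟩ _ hne
      refine Set.disjoint_left.2 ?_
      rintro ω ⟨h1, h2⟩ ⟨h3, h4⟩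
      simp_all
    · exact fun x _ => hmeas _ _
  have hAc : P Aᶜ = 0 := by rw [prob_compl_eq_zero_iff hAm]; exact hPA
  rcases lt_or_ge (n - 1) d with hd | hd
  · have hsub : {ω | D ω = d} ⊆ Aᶜ := by
      intro ω hω hωA
      simp only [hA, Set.mem_iUnion, Finset.mem_product, Finset.mem_range, Set.mem_ofPred_eq] at hωA hω
      obtain ⟨x, hx, h1, -⟩ := hωA
      omega
    rw [measure_mono_null hsub hAc]
    exact Finset.sum_nonneg fun ℓ _ => hw0 ℓ d
  · have hsub : {ω | D ω = d} ⊆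
        (⋃ ℓ ∈ Finset.range (L + 1), {ω | D ω = d ∧ S ω = ℓ}) ∪ Aᶜ := by
      intro ω hω
      by_cases h : ω ∈ A
      · left
        simp only [hA, Set.mem_iUnion, Finset.mem_product, Finset.mem_range,
          Set.mem_ofPred_eq] at h hω ⊢
        obtain ⟨x, hx, h1, h2⟩ := h
        exact ⟨x.1, hx.1, hω, h2⟩
      · exact Or.inr h
    have hle : P {ω | D ω = d} ≤ ENNReal.ofReal (∑ ℓ ∈ Finset.range (L + 1), w ℓ d) := by
      calc P {ω | D ω = d} ≤ _ := measure_mono hsub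
        _ ≤ _ := measure_union_le _ _
        _ ≤ (∑ ℓ ∈ Finset.range (L + 1), P {ω | D ω = d ∧ S ω = ℓ}) + 0 := by
          rw [hAc]; gcongr; exact measure_biUnion_finset_le _ _
        _ = _ := by
          rw [add_zero, ENNReal.ofReal_sum_of_nonneg (fun ℓ _ => hw0 ℓ d)]
          refine Finset.sum_congr rfl fun ℓ hℓ => hjoint' d hd ℓ ?_
          simp at hℓ
          omega
    exact ENNReal.toReal_le_of_le_ofReal (Finset.sum_nonneg fun ℓ _ => hw0 ℓ d) hle

/-- Splitting the mixture over `|ℓ - L μ1| ≤ ε L` and its complement: the first part is controlled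
by the uniform bound on binomial masses at the smallest admissible edge probability, the second by
Chebyshev's inequality. -/
lemma mixture_le {μ0 μ1 Γ0 Γ1 : ℝ} (hμ1 : μ1 ∈ Set.Ioo (0:ℝ) 1)
    (hμ : μ0 + μ1 = 1) (hΓ0 : Γ0 ∈ Set.Ioo (0:ℝ) 1) (hΓ1 : Γ1 ∈ Set.Ioo (0:ℝ) 1)
    {n L : ℕ} (hn : 1 ≤ n) (hL : 0 < L) {ε : ℝ} (hε : 0 < ε) (d : ℕ) :
    ∑ ℓ ∈ Finset.range (L + 1), binPmf L μ1 ℓ * binPmf (n - 1) (Γ1 ^ ℓ * Γ0 ^ (L - ℓ)) d ≤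
      1 / (ε ^ 2 * L) + 1 / √(rexp (Real.log n +
        L * (Real.log (Γ1 ^ μ1 * Γ0 ^ μ0) - ε * |Real.log (Γ1 / Γ0)|)) * (1 - max Γ0 Γ1)) := by
  obtain ⟨hμ1a, hμ1b⟩ := hμ1
  obtain ⟨hΓ0a, hΓ0b⟩ := hΓ0
  obtain ⟨hΓ1a, hΓ1b⟩ := hΓ1
  have hLr : (0 : ℝ) < L := by exact_mod_cast hL
  have hnr : (0 : ℝ) < n := by exact_mod_cast hn
  have hG1 : max Γ0 Γ1 < 1 := max_lt hΓ0b hΓ1b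
  have hG0 : 0 < max Γ0 Γ1 := lt_max_of_lt_left hΓ0a
  set lam := Real.log (Γ1 ^ μ1 * Γ0 ^ μ0) with hlam
  have hlam' : lam = μ1 * Real.log Γ1 + μ0 * Real.log Γ0 := by
    rw [hlam, Real.log_mul (by positivity) (by positivity), Real.log_rpow hΓ1a,
      Real.log_rpow hΓ0a]
  set B := 1 / √(rexp (Real.log n + L * (lam - ε * |Real.log (Γ1 / Γ0)|)) * (1 - max Γ0 Γ1))
    with hB
  have hB0 : 0 ≤ B := by positivity
  have hterm : ∀ ℓ ∈ Finset.range (L + 1),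
      binPmf L μ1 ℓ * binPmf (n - 1) (Γ1 ^ ℓ * Γ0 ^ (L - ℓ)) d ≤
      ((ℓ : ℝ) - L * μ1) ^ 2 * binPmf L μ1 ℓ / (ε * L) ^ 2 + B * binPmf L μ1 ℓ := by
    intro ℓ hℓ
    have hℓL : ℓ ≤ L := by simpa [Nat.lt_succ_iff] using hℓ
    have hb := binPmf_nonneg L hμ1a.le hμ1b.le ℓ
    set p := Γ1 ^ ℓ * Γ0 ^ (L - ℓ) with hp
    have hp0 : 0 < p := by positivity
    have hpG : p ≤ max Γ0 Γ1 := by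
      calc p ≤ (max Γ0 Γ1) ^ ℓ * (max Γ0 Γ1) ^ (L - ℓ) := by
            rw [hp]; gcongr <;> simp
        _ = (max Γ0 Γ1) ^ L := by rw [← pow_add]; congr 1; omega
        _ ≤ max Γ0 Γ1 := pow_le_of_le_one hG0.le hG1.le hL.ne'
    have hp1 : p < 1 := hpG.trans_lt hG1
    have hbd : binPmf (n - 1) p d ≤ ((ℓ : ℝ) - L * μ1) ^ 2 / (ε * L) ^ 2 + B := by
      rcases le_or_gt |(ℓ : ℝ) - L * μ1| (ε * L) with h | h
      · have hlogp : Real.log p = L * lam + (ℓ - L * μ1) * Real.log (Γ1 / Γ0) := by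
          rw [hp, Real.log_mul (by positivity) (by positivity), Real.log_pow, Real.log_pow,
            Real.log_div hΓ1a.ne' hΓ0a.ne', Nat.cast_sub hℓL, hlam',
            show μ0 = 1 - μ1 by linarith]
          ring
        have h2 : -(ε * L * |Real.log (Γ1 / Γ0)|) ≤ (ℓ - L * μ1) * Real.log (Γ1 / Γ0) := by
          refine le_trans ?_ (neg_abs_le _)
          rw [abs_mul]
          exact neg_le_neg (by gcongr)
        have h3 : rexp (Real.log n + L * (lam - ε * |Real.log (Γ1 / Γ0)|)) ≤ n * p := by
          rw [← Real.exp_log (mul_pos hnr hp0), Real.exp_le_exp,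
            Real.log_mul hnr.ne' hp0.ne', hlogp]
          linarith
        have h4 : binPmf (n - 1) p d ≤ B := by
          refine (binPmf_le (n - 1) hp0 hp1 d).trans ?_
          rw [Nat.sub_add_cancel hn, hB]
          have : 0 < 1 - max Γ0 Γ1 := by linarith
          gcongr
        have : 0 ≤ ((ℓ : ℝ) - L * μ1) ^ 2 / (ε * L) ^ 2 := by positivity
        linarith
      · have h1 : binPmf (n - 1) p d ≤ 1 := by
          rcases le_or_gt d (n - 1) with hd | hd
          · rw [← sum_binPmf (n - 1) p]
            refine Finset.single_le_sum (f := binPmf (n - 1) p)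
              (fun k _ => binPmf_nonneg _ hp0.le hp1.le k) ?_
            simp; omega
          · simp [binPmf, Nat.choose_eq_zero_of_lt hd]
        have : 1 ≤ ((ℓ : ℝ) - L * μ1) ^ 2 / (ε * L) ^ 2 := by
          rw [one_le_div (by positivity), ← sq_abs ((ℓ : ℝ) - L * μ1)]
          gcongr
        linarith
    calc _ ≤ binPmf L μ1 ℓ * (((ℓ : ℝ) - L * μ1) ^ 2 / (ε * L) ^ 2 + B) := by gcongr
      _ = _ := by ring
  refine (Finset.sum_le_sum hterm).trans ?_
  rw [Finset.sum_add_distrib, ← Finset.sum_div, ← Finset.mul_sum, sum_sq_binPmf, sum_binPmf,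
    mul_one]
  refine add_le_add ?_ le_rfl
  rw [div_le_div_iff₀ (by positivity) (by positivity)]
  have : μ1 * (1 - μ1) ≤ 1 := by nlinarith
  calc L * μ1 * (1 - μ1) * (ε ^ 2 * L) = (μ1 * (1 - μ1)) * (ε * L) ^ 2 := by ring
    _ ≤ 1 * (ε * L) ^ 2 := by gcongr

/-! ### The uniform limit -/

/-- uniform log-normal approximation of the pmf of `D_n`:
`sup_{d ≥ 1} |P(D_n = d) - (Φ(ln x_n(d)/|σ|) - Φ(ln x_n(d-1)/|σ|))| → 0`,
with `Φ(ln x_n(0)/|σ|)` interpreted as `0`. -/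
theorem stmt9 {Ω : Type*} [MeasurableSpace Ω] (P : Measure Ω) [IsProbabilityMeasure P]
    (μ0 μ1 Γ0 Γ1 : ℝ) (hμ0 : μ0 ∈ Set.Ioo (0:ℝ) 1) (hμ1 : μ1 ∈ Set.Ioo (0:ℝ) 1)
    (hμ : μ0 + μ1 = 1) (hΓ0 : Γ0 ∈ Set.Ioo (0:ℝ) 1) (hΓ1 : Γ1 ∈ Set.Ioo (0:ℝ) 1)
    (hΓ : Γ0 ≠ Γ1) (ρ : ℝ) (hρ : 0 < ρ)
    (hcond : 0 < 1 + ρ * Real.log (Γ1 ^ μ1 * Γ0 ^ μ0))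
    (L : ℕ → ℕ) (hL : IsAdmissible ρ L)
    (D S : ℕ → Ω → ℕ)
    (hDS : ∀ n, 2 ≤ n → IsCompoundBinomialPair P μ1 μ0 Γ1 Γ0 n (L n) (D n) (S n)) :
    Tendsto (fun n =>
        ⨆ d : {d : ℕ // 1 ≤ d},
          |(P {ω | D n ω = d.1}).toReal -
            (Phi (Real.log (((d.1 : ℝ) * (n : ℝ) ^
                  (-(1 + ((L n : ℝ) / Real.log n) * Real.log (Γ1 ^ μ1 * Γ0 ^ μ0)))) ^
                    ((Real.sqrt (L n))⁻¹)) /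
                |Real.sqrt (μ0 * μ1) * Real.log (Γ1 / Γ0)|) -
              (if d.1 = 1 then 0 else
                Phi (Real.log ((((d.1 : ℝ) - 1) * (n : ℝ) ^
                    (-(1 + ((L n : ℝ) / Real.log n) * Real.log (Γ1 ^ μ1 * Γ0 ^ μ0)))) ^
                      ((Real.sqrt (L n))⁻¹)) /
                  |Real.sqrt (μ0 * μ1) * Real.log (Γ1 / Γ0)|)))|)
      atTop (nhds 0) := by
  obtain ⟨hLpos, hLlim⟩ := hL
  set lam := Real.log (Γ1 ^ μ1 * Γ0 ^ μ0) with hlam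
  set KK := |Real.log (Γ1 / Γ0)| with hKK
  set K := |√(μ0 * μ1) * Real.log (Γ1 / Γ0)| with hK
  have hlogne : Real.log (Γ1 / Γ0) ≠ 0 := by
    rw [Real.log_div hΓ1.1.ne' hΓ0.1.ne', sub_ne_zero]
    exact fun h => hΓ (Real.log_injOn_pos hΓ0.1 hΓ1.1 h.symm)
  have hKKpos : 0 < KK := abs_pos.2 hlogne
  have hKpos : 0 < K :=
    abs_pos.2 (mul_ne_zero (Real.sqrt_pos.2 (mul_pos hμ0.1 hμ1.1)).ne' hlogne)
  have hG : 0 < 1 - max Γ0 Γ1 := sub_pos.2 (max_lt hΓ0.2 hΓ1.2)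
  -- this `ε` makes the exponent `1 + ρ (λ - ε KK)` equal to `(1 + ρ λ) / 2 > 0`
  set ε := (1 + ρ * lam) / (2 * ρ * KK) with hε
  have hεpos : 0 < ε := by positivity
  have hlog : Tendsto (fun n : ℕ => Real.log n) atTop atTop :=
    Real.tendsto_log_atTop.comp tendsto_natCast_atTop_atTop
  have hρn : Tendsto (fun n => (L n : ℝ) / Real.log n) atTop (nhds ρ) := by
    have h := hLlim.const_mul ρ
    rw [mul_one] at h
    refine h.congr fun n => ?_
    field_simp
  have hLinf : Tendsto (fun n => (L n : ℝ)) atTop atTop := by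
    refine (hρn.pos_mul_atTop hρ hlog).congr' ?_
    filter_upwards [hlog.eventually_gt_atTop 0] with n hn
    field_simp
  have hsq : Tendsto (fun n => √(L n : ℝ)) atTop atTop := Real.tendsto_sqrt_atTop.comp hLinf
  have hlim1 : Tendsto (fun n => 1 / (ε ^ 2 * (L n : ℝ))) atTop (nhds 0) :=
    (hLinf.const_mul_atTop (by positivity)).const_div_atTop 1
  have hexp : Tendsto (fun n : ℕ => Real.log n + L n * (lam - ε * KK)) atTop atTop := by
    have h : Tendsto (fun n => 1 + (L n : ℝ) / Real.log n * (lam - ε * KK)) atTop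
        (nhds (1 + ρ * (lam - ε * KK))) := (hρn.mul_const _).const_add 1
    have hpos : 0 < 1 + ρ * (lam - ε * KK) := by
      have : 1 + ρ * (lam - ε * KK) = (1 + ρ * lam) / 2 := by
        rw [hε]; field_simp; ring
      rw [this]; positivity
    refine (h.pos_mul_atTop hpos hlog).congr' ?_
    filter_upwards [hlog.eventually_gt_atTop 0] with n hn
    field_simp
  have hlim2 : Tendsto (fun n : ℕ => 1 / √(rexp (Real.log n + L n * (lam - ε * KK)) *
      (1 - max Γ0 Γ1))) atTop (nhds 0) :=
    (Real.tendsto_sqrt_atTop.comp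
      ((Real.tendsto_exp_atTop.comp hexp).atTop_mul_const hG)).const_div_atTop 1
  have hlim3 : Tendsto (fun n : ℕ => Phi ((√(L n))⁻¹ *
      (-(1 + (L n : ℝ) / Real.log n * lam) * Real.log n) / K)) atTop (nhds 0) := by
    refine tendsto_Phi_atBot.comp ?_
    have h : Tendsto (fun n => -((1 + (L n : ℝ) / Real.log n * lam) / ((L n : ℝ) / Real.log n) / K))
        atTop (nhds (-((1 + ρ * lam) / ρ / K))) :=
      ((((hρn.mul_const _).const_add 1).div hρn hρ.ne').div_const K).neg
    refine (h.neg_mul_atTop (neg_neg_of_pos (by positivity)) hsq).congr' ?_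
    filter_upwards [hlog.eventually_gt_atTop 0] with n hn
    have hL0 : (0 : ℝ) < L n := by exact_mod_cast hLpos n
    have hs : 0 < √(L n : ℝ) := Real.sqrt_pos.2 hL0
    have hss : (L n : ℝ) = √(L n : ℝ) ^ 2 := (Real.sq_sqrt hL0.le).symm
    set s := √(L n : ℝ)
    rw [hss]
    field_simp
  have hlim4 : Tendsto (fun n : ℕ => Real.log 2 / (√(L n) * K)) atTop (nhds 0) :=
    (hsq.atTop_mul_const hKpos).const_div_atTop _
  have hU := (hlim1.add hlim2).add (hlim3.add hlim4)
  simp only [add_zero] at hU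
  refine squeeze_zero' (Eventually.of_forall fun n => Real.iSup_nonneg fun d => abs_nonneg _) ?_ hU
  filter_upwards [eventually_ge_atTop 2] with n hn
  have hL0 : (0 : ℝ) < L n := by exact_mod_cast hLpos n
  have hs : 0 < √(L n : ℝ) := Real.sqrt_pos.2 hL0
  have hn0 : (0 : ℝ) < n := by exact_mod_cast (by omega : 0 < n)
  have hPhi0 : ∀ z, 0 ≤ Phi z := fun z => by
    rw [Phi_eq_cdf]; exact cdf_nonneg _ _
  set a := -(1 + (L n : ℝ) / Real.log n * lam) with ha
  have hx : ∀ t : ℝ, 0 < t → Real.log ((t * (n : ℝ) ^ a) ^ ((√(L n))⁻¹)) =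
      (√(L n))⁻¹ * (Real.log t + a * Real.log n) := by
    intro t ht
    have hna : 0 < (n : ℝ) ^ a := Real.rpow_pos_of_pos hn0 a
    rw [Real.log_rpow (by positivity), Real.log_mul ht.ne' hna.ne', Real.log_rpow hn0]
  have hlog2 : 0 < Real.log 2 := Real.log_pos one_lt_two
  refine Real.iSup_le ?_ ?_
  · rintro ⟨d, hd⟩
    have hA := (pmf_le_mixture P hμ1 hμ hΓ0 hΓ1 (hDS n hn) d).trans
      (mixture_le hμ1 hμ hΓ0 hΓ1 (by omega) (hLpos n) hεpos d)
    rw [← hlam, ← hKK] at hA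
    refine (abs_sub _ _).trans (add_le_add ?_ ?_)
    · rwa [abs_of_nonneg ENNReal.toReal_nonneg]
    · by_cases h1 : d = 1
      · subst h1
        simp only [Nat.cast_one, if_true, sub_zero]
        rw [hx 1 one_pos, Real.log_one, zero_add, abs_of_nonneg (hPhi0 _)]
        have : 0 ≤ Real.log 2 / (√(L n) * K) := by positivity
        linarith
      · have hd2 : (2 : ℝ) ≤ d := by exact_mod_cast (by omega : 2 ≤ d)
        simp only [h1, if_false]
        rw [hx d (by linarith), hx (d - 1) (by linarith)]
        refine (Phi_lipschitz _ _).trans ?_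
        have e : (√(L n : ℝ))⁻¹ * (Real.log d + a * Real.log n) / K -
            (√(L n : ℝ))⁻¹ * (Real.log ((d : ℝ) - 1) + a * Real.log n) / K =
            (Real.log d - Real.log ((d : ℝ) - 1)) / (√(L n) * K) := by
          field_simp; ring
        have hle1 : Real.log ((d : ℝ) - 1) ≤ Real.log d :=
          Real.log_le_log (by linarith) (by linarith)
        -- `d ≤ 2 (d - 1)` for `d ≥ 2`
        have hle2 : Real.log d ≤ Real.log 2 + Real.log ((d : ℝ) - 1) := by
          rw [← Real.log_mul two_ne_zero (by linarith)]
          exact Real.log_le_log (by linarith) (by linarith)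
        rw [e, abs_of_nonneg (div_nonneg (by linarith) (by positivity))]
        refine le_trans ?_ (le_add_of_nonneg_left (hPhi0 _))
        gcongr
        linarith
  · have := hPhi0 ((√(L n))⁻¹ * (a * Real.log n) / K)
    positivity
end
end
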